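/- arXiv:1802.01728 — 4 statements merged into one kernel-verified Lean document; each statement's English description precedes it below -/
import Mathlib

section
/- Let w be a non-increasing positive function on I=(0,a), 0<a≤∞, with W(t)=∫₀ᵗ w dm finite on I, and let f be measurable on I such that f*/w belongs to L₁+L∞ with respect to the measure ω=w·dm (i.e. ∫₀ˣ (f*/w)^{*,w} dm < ∞ for every x). Then the Halperin level function f⁰ of f with respect to w satisfies, for every λ > 0, ∫_I (f⁰ − λw)₊ dm ≤ ∫_I (f* − λw)₊ dm; consequently ∫₀ˣ (f⁰/w)^{*,w} dm ≤ ∫₀ˣ (f*/w)^{*,w} dm for every x ∈ (0, W(a)). -/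
open MeasureTheory Set Filter
open scoped ENNReal

/-- The interval `(0, a)` for `a : ℝ≥0∞` (equals `(0,∞)` when `a = ∞`). -/
def Iset (a : ℝ≥0∞) : Set ℝ := {x : ℝ | 0 < x ∧ ENNReal.ofReal x < a}

/-- Lebesgue measure restricted to the interval `(0,a)`. -/
noncomputable def volI (a : ℝ≥0∞) : Measure ℝ := volume.restrict (Iset a)

/-- Decreasing rearrangement of an `ℝ≥0∞`-valued function with respect to a measure `μ`:
`f^{*,μ}(t) = inf {s > 0 : μ({f > s}) ≤ t}`. -/
noncomputable def rearrE (μ : Measure ℝ) (f : ℝ → ℝ≥0∞) (t : ℝ) : ℝ≥0∞ :=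
  sInf {s : ℝ≥0∞ | 0 < s ∧ μ {x | s < f x} ≤ ENNReal.ofReal t}

/-- Decreasing rearrangement of a real function with respect to a measure `μ` on `ℝ`:
`f^{*,μ}(t) = inf {s > 0 : μ({|f| > s}) ≤ t}`. -/
noncomputable def rearr (μ : Measure ℝ) (f : ℝ → ℝ) (t : ℝ) : ℝ≥0∞ :=
  rearrE μ (fun x => ENNReal.ofReal |f x|) t

/-- The measure `w·dm` on the set `I`. -/
noncomputable def wMeas (I : Set ℝ) (w : ℝ → ℝ) : Measure ℝ :=
  (volume.restrict I).withDensity (fun t => ENNReal.ofReal (w t))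

/-- `W(t) = ∫₀ᵗ w dm`. -/
noncomputable def Wfun (w : ℝ → ℝ) (t : ℝ) : ℝ := ∫ s in Set.Ioo (0:ℝ) t, w s

/-- `b = ∫_I w dm` as an extended real number. -/
noncomputable def bval (a : ℝ≥0∞) (w : ℝ → ℝ) : ℝ≥0∞ := ∫⁻ x in Iset a, ENNReal.ofReal (w x)

open scoped Classical

/-- Halperin's ratio `R(α,β) = (∫_α^β g dm)/(∫_α^β w dm)` for finite `β`. -/
noncomputable def Rq (w : ℝ → ℝ) (g : ℝ → ℝ≥0∞) (α β : ℝ) : ℝ≥0∞ :=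
  (∫⁻ t in Set.Ioo α β, g t) / (∫⁻ t in Set.Ioo α β, ENNReal.ofReal (w t))

/-- Halperin's ratio `R(α,β)` for `β ∈ (0,∞]`, with `R(α,∞) = limsup_{t→∞} R(α,t)`. -/
noncomputable def RR (w : ℝ → ℝ) (g : ℝ → ℝ≥0∞) (α : ℝ) (β : ℝ≥0∞) : ℝ≥0∞ :=
  if β = ∞ then Filter.limsup (fun t => Rq w g α t) Filter.atTop else Rq w g α β.toReal

/-- `(α,β) ⊆ (0,a)` is a level interval of `g` with respect to `w`:
`0 < R(α,β)` and `R(α,t) ≤ R(α,β)` for all `t ∈ (α,β)`. -/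
def IsLevelInterval (a : ℝ≥0∞) (w : ℝ → ℝ) (g : ℝ → ℝ≥0∞) (α : ℝ) (β : ℝ≥0∞) : Prop :=
  0 ≤ α ∧ ENNReal.ofReal α < β ∧ β ≤ a ∧ 0 < RR w g α β ∧
    ∀ t : ℝ, α < t → ENNReal.ofReal t < β → Rq w g α t ≤ RR w g α β

/-- A maximal level interval: a level interval contained in no strictly larger one. -/
def IsMaxLevelInterval (a : ℝ≥0∞) (w : ℝ → ℝ) (g : ℝ → ℝ≥0∞) (α : ℝ) (β : ℝ≥0∞) : Prop :=
  IsLevelInterval a w g α β ∧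
    ∀ α' β', IsLevelInterval a w g α' β' → α' ≤ α → β ≤ β' → α' = α ∧ β' = β

/-- Halperin's level function of (the non-negative, decreasing) `g` with respect to `w`:
equal to `R(α,β)·w(t)` on each maximal level interval `(α,β)` and to `g(t)` elsewhere. -/
noncomputable def levelFun (a : ℝ≥0∞) (w : ℝ → ℝ) (g : ℝ → ℝ≥0∞) (t : ℝ) : ℝ≥0∞ :=
  if h : ∃ α β, IsMaxLevelInterval a w g α β ∧ α < t ∧ ENNReal.ofReal t < β then
    RR w g h.choose h.choose_spec.choose * ENNReal.ofReal (w t)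
  else g t

/-- Layer cake formula for `ℝ≥0∞`-valued functions. -/
theorem layer_cake_E (μ : Measure ℝ) [SFinite μ] (k : ℝ → ℝ≥0∞) (hk : Measurable k) :
    ∫⁻ x, k x ∂μ = ∫⁻ s in Set.Ioi (0:ℝ), μ {x | ENNReal.ofReal s < k x} := by
  have h1 : ∀ c : ℝ≥0∞, c = ∫⁻ s in Set.Ioi (0:ℝ), {s : ℝ | ENNReal.ofReal s < c}.indicator 1 s := by
    intro c
    have hm : MeasurableSet {s : ℝ | ENNReal.ofReal s < c} :=
      measurableSet_lt ENNReal.measurable_ofReal measurable_const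
    rw [lintegral_indicator_one hm, Measure.restrict_apply hm]
    by_cases hc : c = ∞
    · subst hc
      have : {s : ℝ | ENNReal.ofReal s < ∞} ∩ Set.Ioi 0 = Set.Ioi 0 := by
        ext s; simp
      rw [this]; simp
    · have : {s : ℝ | ENNReal.ofReal s < c} ∩ Set.Ioi 0 = Set.Ioo 0 c.toReal := by
        ext s
        simp only [mem_inter_iff, mem_ofPred_eq, mem_Ioi, mem_Ioo]
        constructor
        · rintro ⟨h, h'⟩
          exact ⟨h', (ENNReal.ofReal_lt_iff_lt_toReal h'.le hc).1 h⟩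
        · rintro ⟨h, h'⟩
          exact ⟨(ENNReal.ofReal_lt_iff_lt_toReal h.le hc).2 h', h⟩
      rw [this]; simp [hc]
  have hm : MeasurableSet {p : ℝ × ℝ | ENNReal.ofReal p.2 < k p.1} :=
    measurableSet_lt (ENNReal.measurable_ofReal.comp measurable_snd) (hk.comp measurable_fst)
  calc ∫⁻ x, k x ∂μ = ∫⁻ x, (∫⁻ s in Set.Ioi (0:ℝ),
        {s : ℝ | ENNReal.ofReal s < k x}.indicator 1 s) ∂μ := by
        apply lintegral_congr; intro x; exact h1 _
    _ = ∫⁻ s in Set.Ioi (0:ℝ), ∫⁻ x, {s : ℝ | ENNReal.ofReal s < k x}.indicator 1 s ∂μ := by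
        apply lintegral_lintegral_swap
        have : (Function.uncurry fun (x s : ℝ) =>
          ({s : ℝ | ENNReal.ofReal s < k x}.indicator (1 : ℝ → ℝ≥0∞) s)) =
          {p : ℝ × ℝ | ENNReal.ofReal p.2 < k p.1}.indicator 1 := by
          ext ⟨x, s⟩; simp [Function.uncurry, Set.indicator]
        rw [this]
        exact (measurable_one.indicator hm).aemeasurable
    _ = _ := by
        apply lintegral_congr; intro s
        rw [← lintegral_indicator_one (measurableSet_lt measurable_const hk)]
        apply lintegral_congr; intro x
        simp [Set.indicator]

theorem rearrE_antitone (μ : Measure ℝ) (k : ℝ → ℝ≥0∞) : Antitone (rearrE μ k) := by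
  intro s t hst
  apply sInf_le_sInf
  rintro u ⟨hu, hu'⟩
  exact ⟨hu, hu'.trans (ENNReal.ofReal_le_ofReal hst)⟩

theorem lt_rearrE_iff (μ : Measure ℝ) (k : ℝ → ℝ≥0∞) (s : ℝ≥0∞) (hs : 0 < s) (hs' : s ≠ ∞) (t : ℝ) :
    s < rearrE μ k t ↔ ENNReal.ofReal t < μ {x | s < k x} := by
  constructor
  · intro h
    by_contra hc
    exact absurd (sInf_le ⟨hs, not_lt.1 hc⟩ : rearrE μ k t ≤ s) (not_le.2 h)
  · intro h
    obtain ⟨u, hu, hmem, hlim⟩ := exists_seq_strictAnti_tendsto' (lt_top_iff_ne_top.2 hs')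
    have hU : {x | s < k x} = ⋃ n, {x | u n < k x} := by
      ext x
      simp only [mem_ofPred_eq, mem_iUnion]
      constructor
      · intro hx
        exact ((hlim.eventually (gt_mem_nhds hx)).exists)
      · rintro ⟨n, hn⟩
        exact (hmem n).1.trans hn
    have hmono : Monotone fun n => {x | u n < k x} := by
      intro m n hmn x hx
      exact lt_of_le_of_lt (hu.antitone hmn) hx
    rw [hU, hmono.measure_iUnion] at h
    obtain ⟨n, hn⟩ := lt_iSup_iff.1 h
    refine lt_of_lt_of_le (hmem n).1 (le_sInf ?_)
    rintro v ⟨_, hv⟩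
    by_contra hc
    have : μ {x | u n < k x} ≤ μ {x | v < k x} :=
      measure_mono fun x hx => lt_of_lt_of_le (not_le.1 hc) (le_of_lt hx)
    exact absurd (this.trans hv) (not_le.2 hn)

theorem vol_lt (c : ℝ≥0∞) : (volume.restrict (Set.Ioi (0:ℝ))) {t : ℝ | ENNReal.ofReal t < c} = c := by
  have hm : MeasurableSet {s : ℝ | ENNReal.ofReal s < c} :=
    measurableSet_lt ENNReal.measurable_ofReal measurable_const
  rw [Measure.restrict_apply hm]
  by_cases hc : c = ∞
  · subst hc
    have : {s : ℝ | ENNReal.ofReal s < ∞} ∩ Set.Ioi 0 = Set.Ioi 0 := by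
      ext s; simp
    rw [this]; simp
  · have : {s : ℝ | ENNReal.ofReal s < c} ∩ Set.Ioi 0 = Set.Ioo 0 c.toReal := by
      ext s
      simp only [mem_inter_iff, mem_ofPred_eq, mem_Ioi, mem_Ioo]
      constructor
      · rintro ⟨h, h'⟩
        exact ⟨h', (ENNReal.ofReal_lt_iff_lt_toReal h'.le hc).1 h⟩
      · rintro ⟨h, h'⟩
        exact ⟨(ENNReal.ofReal_lt_iff_lt_toReal h.le hc).2 h', h⟩
    rw [this]; simp [hc]

theorem lintegral_rearrE_sub (μ : Measure ℝ) [SFinite μ] (k : ℝ → ℝ≥0∞) (hk : Measurable k)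
    (l : ℝ≥0∞) (hl : l ≠ ∞) :
    ∫⁻ t in Set.Ioi (0:ℝ), (rearrE μ k t - l) = ∫⁻ x, (k x - l) ∂μ := by
  have hm := (rearrE_antitone μ k).measurable
  rw [layer_cake_E _ _ (hm.sub_const l), layer_cake_E _ _ (hk.sub_const l)]
  apply setLIntegral_congr_fun measurableSet_Ioi
  intro s hs
  have hs : 0 < s := hs
  simp only [lt_tsub_iff_right]
  have h0 : 0 < ENNReal.ofReal s + l := lt_of_lt_of_le (ENNReal.ofReal_pos.2 hs) le_self_add
  have h1 : ENNReal.ofReal s + l ≠ ∞ := by simp [hl]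
  simp only [lt_rearrE_iff μ k _ h0 h1]
  exact vol_lt _

/-- Comparison principle of Hardy-Littlewood-Polya type. -/
theorem hlp (μ : Measure ℝ) [SFinite μ] (h k : ℝ → ℝ≥0∞) (hh : Measurable h) (hk : Measurable k)
    (H : ∀ l : ℝ, 0 < l → ∫⁻ x, (h x - ENNReal.ofReal l) ∂μ ≤ ∫⁻ x, (k x - ENNReal.ofReal l) ∂μ)
    (x : ℝ) (hx : 0 < x) :
    ∫⁻ t in Set.Ioo 0 x, rearrE μ h t ≤ ∫⁻ t in Set.Ioo 0 x, rearrE μ k t := by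
  by_cases htop : rearrE μ k x = ∞
  · have : ∫⁻ t in Set.Ioo 0 x, rearrE μ k t = ∞ := by
      rw [eq_top_iff]
      calc ∞ = ∫⁻ t in Set.Ioo 0 x, (∞ : ℝ≥0∞) := by simp [hx]
        _ ≤ _ := by
          apply setLIntegral_mono' measurableSet_Ioo
          intro t ht
          rw [← htop]; exact rearrE_antitone μ k ht.2.le
    rw [this]; exact le_top
  apply ENNReal.le_of_forall_pos_le_add
  intro e he _
  set d : ℝ := e / x with hd
  have hdpos : 0 < d := by positivity
  set l : ℝ := (rearrE μ k x).toReal + d with hl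
  have hlpos : 0 < l := by positivity
  have hlE : ENNReal.ofReal l = rearrE μ k x + ENNReal.ofReal d := by
    rw [hl, ENNReal.ofReal_add ENNReal.toReal_nonneg hdpos.le, ENNReal.ofReal_toReal htop]
  have hsplit : ∫⁻ t in Set.Ioi (0:ℝ), (rearrE μ k t - ENNReal.ofReal l)
      = ∫⁻ t in Set.Ioo 0 x, (rearrE μ k t - ENNReal.ofReal l) := by
    rw [← Set.Ioo_union_Ici_eq_Ioi hx, lintegral_union measurableSet_Ici]
    · have : ∫⁻ t in Set.Ici x, (rearrE μ k t - ENNReal.ofReal l) = 0 := by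
        rw [setLIntegral_congr_fun (g := fun _ => 0) measurableSet_Ici]
        · simp
        · intro t ht
          simp only
          rw [tsub_eq_zero_iff_le, hlE]
          exact (rearrE_antitone μ k ht).trans le_self_add
      rw [this, add_zero]
    · rw [Set.disjoint_left]; intro t ht ht'
      exact absurd ht.2 (not_lt.2 ht')
  calc ∫⁻ t in Set.Ioo 0 x, rearrE μ h t
      ≤ ∫⁻ t in Set.Ioo 0 x, ((rearrE μ h t - ENNReal.ofReal l) + ENNReal.ofReal l) :=
        lintegral_mono fun t => le_tsub_add
    _ = (∫⁻ t in Set.Ioo 0 x, (rearrE μ h t - ENNReal.ofReal l)) + ∫⁻ _ in Set.Ioo 0 x, ENNReal.ofReal l :=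
        lintegral_add_right _ measurable_const
    _ ≤ (∫⁻ t in Set.Ioi 0, (rearrE μ h t - ENNReal.ofReal l)) + ∫⁻ _ in Set.Ioo 0 x, ENNReal.ofReal l := by
        gcongr; exact Set.Ioo_subset_Ioi_self
    _ ≤ (∫⁻ t in Set.Ioi 0, (rearrE μ k t - ENNReal.ofReal l)) + ∫⁻ _ in Set.Ioo 0 x, ENNReal.ofReal l := by
        gcongr ?_ + _
        rw [lintegral_rearrE_sub _ _ hh _ ENNReal.ofReal_ne_top,
          lintegral_rearrE_sub _ _ hk _ ENNReal.ofReal_ne_top]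
        exact H l hlpos
    _ = ∫⁻ t in Set.Ioo 0 x, ((rearrE μ k t - ENNReal.ofReal l) + ENNReal.ofReal l) := by
        rw [hsplit, lintegral_add_right _ measurable_const]
    _ ≤ ∫⁻ t in Set.Ioo 0 x, (rearrE μ k t + ENNReal.ofReal d) := by
        apply setLIntegral_mono' measurableSet_Ioo
        intro t ht
        have h1 : rearrE μ k x ≤ rearrE μ k t := rearrE_antitone μ k ht.2.le
        rcases le_total (ENNReal.ofReal l) (rearrE μ k t) with h2 | h2
        · rw [tsub_add_cancel_of_le h2]; exact le_self_add
        · rw [tsub_eq_zero_of_le h2, zero_add, hlE]; gcongr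
    _ = (∫⁻ t in Set.Ioo 0 x, rearrE μ k t) + e := by
        rw [lintegral_add_right _ measurable_const]
        congr 1
        simp only [lintegral_const, Measure.restrict_apply_univ, Real.volume_Ioo, sub_zero]
        rw [← ENNReal.ofReal_mul hdpos.le, hd, div_mul_cancel₀ _ hx.ne']
        simp

theorem sub_fin (μ : Measure ℝ) [SFinite μ] (k : ℝ → ℝ≥0∞) (hk : Measurable k)
    (hfin : ∫⁻ t in Set.Ioo 0 (1:ℝ), rearrE μ k t ≠ ∞) :
    ∃ l : ℝ, 0 < l ∧ ∫⁻ x, (k x - ENNReal.ofReal l) ∂μ ≠ ∞ := by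
  have htop : rearrE μ k 1 ≠ ∞ := by
    intro htop
    apply hfin
    rw [eq_top_iff]
    calc ∞ = ∫⁻ t in Set.Ioo 0 (1:ℝ), (∞ : ℝ≥0∞) := by simp
      _ ≤ _ := by
        apply setLIntegral_mono' measurableSet_Ioo
        intro t ht
        rw [← htop]; exact rearrE_antitone μ k ht.2.le
  refine ⟨(rearrE μ k 1).toReal + 1, by positivity, ?_⟩
  have hle : rearrE μ k 1 ≤ ENNReal.ofReal ((rearrE μ k 1).toReal + 1) := by
    rw [ENNReal.le_ofReal_iff_toReal_le htop (by positivity)]; linarith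
  rw [← lintegral_rearrE_sub _ _ hk _ ENNReal.ofReal_ne_top, ← Set.Ioo_union_Ici_eq_Ioi one_pos]
  refine ne_top_of_le_ne_top ?_ (lintegral_union_le _ _ _)
  refine ENNReal.add_ne_top.2 ⟨ne_top_of_le_ne_top hfin (lintegral_mono fun t => tsub_le_self), ?_⟩
  rw [setLIntegral_congr_fun (g := fun _ => 0) measurableSet_Ici]
  · simp
  · intro t ht
    simp only
    rw [tsub_eq_zero_iff_le]
    exact (rearrE_antitone μ k ht).trans hle

/-- Real primitive. -/
noncomputable def primR (g : ℝ → ℝ≥0∞) (x : ℝ) : ℝ := (∫⁻ s in Set.Ioo 0 x, g s).toReal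

theorem split_Ioo (g : ℝ → ℝ≥0∞) (α t : ℝ) (h0 : 0 ≤ α) (ht : α < t) :
    ∫⁻ s in Set.Ioo 0 t, g s = (∫⁻ s in Set.Ioo 0 α, g s) + ∫⁻ s in Set.Ioo α t, g s := by
  have e : ∀ x y : ℝ, ∫⁻ s in Set.Ioo x y, g s = ∫⁻ s in Set.Ioc x y, g s :=
    fun x y => setLIntegral_congr Ioo_ae_eq_Ioc
  rw [e, e, e, ← Set.Ioc_union_Ioc_eq_Ioc h0 ht.le, lintegral_union measurableSet_Ioc]
  rw [Set.disjoint_left]; intro x hx hx'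
  exact absurd hx.2 (not_le.2 hx'.1)

theorem primR_sub (g : ℝ → ℝ≥0∞) (α t : ℝ) (h0 : 0 ≤ α) (ht : α < t)
    (hfin : ∫⁻ s in Set.Ioo 0 t, g s ≠ ∞) :
    ∫⁻ s in Set.Ioo α t, g s = ENNReal.ofReal (primR g t - primR g α) ∧ primR g α ≤ primR g t := by
  have h := split_Ioo g α t h0 ht
  rw [h] at hfin
  obtain ⟨h1, h2⟩ := ENNReal.add_ne_top.1 hfin
  have : primR g t = primR g α + (∫⁻ s in Set.Ioo α t, g s).toReal := by
    unfold primR; rw [h, ENNReal.toReal_add h1 h2]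
  rw [this]
  refine ⟨?_, by simp⟩
  rw [add_sub_cancel_left, ENNReal.ofReal_toReal h2]

theorem subset_Iset {a : ℝ≥0∞} {α t : ℝ} (h0 : 0 ≤ α) (ht : ENNReal.ofReal t ≤ a) :
    Set.Ioo α t ⊆ Iset a := by
  intro x hx
  have : 0 < x := h0.trans_lt hx.1
  exact ⟨this, lt_of_lt_of_le ((ENNReal.ofReal_lt_ofReal_iff (this.trans hx.2)).2 hx.2) ht⟩

theorem Ioo_w_pos {a : ℝ≥0∞} {w : ℝ → ℝ} (hw_pos : ∀ x ∈ Iset a, 0 < w x) (hw_meas : Measurable w)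
    {α t : ℝ} (h0 : 0 ≤ α) (hat : α < t) (ht : ENNReal.ofReal t ≤ a) :
    0 < ∫⁻ s in Set.Ioo α t, ENNReal.ofReal (w s) := by
  rw [setLIntegral_pos_iff hw_meas.ennreal_ofReal]
  have : Function.support (fun s => ENNReal.ofReal (w s)) ∩ Set.Ioo α t = Set.Ioo α t := by
    apply inter_eq_right.2
    intro x hx
    simpa using hw_pos x (subset_Iset h0 ht hx)
  rw [this]; simpa using hat

/-- local finiteness package -/
structure LocFin (a : ℝ≥0∞) (w : ℝ → ℝ) (g : ℝ → ℝ≥0∞) : Prop where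
  pos : ∀ x ∈ Iset a, 0 < w x
  meas : Measurable w
  finW : ∀ t, 0 < t → ENNReal.ofReal t ≤ a → ∫⁻ s in Set.Ioo 0 t, ENNReal.ofReal (w s) ≠ ∞
  finG : ∀ t, 0 < t → ENNReal.ofReal t ≤ a → ∫⁻ s in Set.Ioo 0 t, g s ≠ ∞

/-- primitive of the weight -/
noncomputable def primW (w : ℝ → ℝ) (x : ℝ) : ℝ := primR (fun s => ENNReal.ofReal (w s)) x

theorem LocFin.props {a : ℝ≥0∞} {w : ℝ → ℝ} {g : ℝ → ℝ≥0∞} (H : LocFin a w g)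
    {α t : ℝ} (h0 : 0 ≤ α) (hat : α < t) (ht : ENNReal.ofReal t ≤ a) :
    primW w α < primW w t ∧ primR g α ≤ primR g t ∧
    ∀ q : ℝ, 0 ≤ q → (Rq w g α t ≤ ENNReal.ofReal q ↔
      primR g t - primR g α ≤ q * (primW w t - primW w α)) := by
  have hG := primR_sub g α t h0 hat (H.finG t (h0.trans_lt hat) ht)
  have hW := primR_sub (fun s => ENNReal.ofReal (w s)) α t h0 hat (H.finW t (h0.trans_lt hat) ht)
  have hp := Ioo_w_pos H.pos H.meas h0 hat ht
  have hlt : primW w α < primW w t := by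
    rw [hW.1, ENNReal.ofReal_pos] at hp
    unfold primW; linarith
  refine ⟨hlt, hG.2, fun q hq => ?_⟩
  unfold Rq
  rw [hG.1, hW.1]
  change _ / ENNReal.ofReal (primW w t - primW w α) ≤ _ ↔ _
  rw [← ENNReal.ofReal_div_of_pos (by linarith), ENNReal.ofReal_le_ofReal_iff hq,
    div_le_iff₀ (by linarith)]

theorem LocFin.Rq_ne_top {a : ℝ≥0∞} {w : ℝ → ℝ} {g : ℝ → ℝ≥0∞} (H : LocFin a w g)
    {α t : ℝ} (h0 : 0 ≤ α) (hat : α < t) (ht : ENNReal.ofReal t ≤ a) : Rq w g α t ≠ ∞ := by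
  unfold Rq
  apply ENNReal.div_ne_top
  · rw [(primR_sub g α t h0 hat (H.finG t (h0.trans_lt hat) ht)).1]; exact ENNReal.ofReal_ne_top
  · exact (Ioo_w_pos H.pos H.meas h0 hat ht).ne'

theorem RR_transfer {w : ℝ → ℝ} {g : ℝ → ℝ≥0∞} {α₁ α₂ t : ℝ} {β q c : ℝ≥0∞}
    (hq : RR w g α₁ β < q) (ht0 : 0 ≤ t) (ht : ENNReal.ofReal t < β)
    (h : ∀ s, t ≤ s → ENNReal.ofReal s ≤ β → Rq w g α₁ s ≤ q → Rq w g α₂ s ≤ c) :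
    RR w g α₂ β ≤ c := by
  unfold RR at hq ⊢
  split_ifs at hq ⊢ with hb
  · have h1 := eventually_lt_of_limsup_lt hq
    apply limsup_le_of_le
    · isBoundedDefault
    filter_upwards [h1, eventually_ge_atTop t] with s hs hts
    exact h s hts (by simp [hb]) hs.le
  · refine h _ ?_ ?_ hq.le
    · exact ((ENNReal.ofReal_lt_iff_lt_toReal ht0 hb).1 ht).le
    · rw [ENNReal.ofReal_toReal hb]

theorem LocFin.union {a : ℝ≥0∞} {w : ℝ → ℝ} {g : ℝ → ℝ≥0∞} (H : LocFin a w g)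
    {α₁ α₂ : ℝ} {β₁ β₂ : ℝ≥0∞} (h1 : IsLevelInterval a w g α₁ β₁)
    (h2 : IsLevelInterval a w g α₂ β₂) (h12 : α₁ < α₂) (h21 : ENNReal.ofReal α₂ < β₁)
    (hb : β₁ < β₂) : IsLevelInterval a w g α₁ β₂ := by
  obtain ⟨h10, h11, h1a, h1p, h1t⟩ := h1
  obtain ⟨h20, h22, h2a, h2p, h2t⟩ := h2
  have hb1 : β₁ ≠ ∞ := hb.ne_top
  obtain ⟨b, hb0, rfl⟩ : ∃ b : ℝ, 0 ≤ b ∧ β₁ = ENNReal.ofReal b :=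
    ⟨β₁.toReal, ENNReal.toReal_nonneg, (ENNReal.ofReal_toReal hb1).symm⟩
  have hα₂b : α₂ < b := (ENNReal.ofReal_lt_ofReal_iff_of_nonneg h20).1 h21
  have hRR1 : RR w g α₁ (ENNReal.ofReal b) = Rq w g α₁ b := by
    simp [RR, hb0]
  rw [hRR1] at h1p h1t
  -- data on (α₁, α₂)
  have hα₂a : ENNReal.ofReal α₂ ≤ a := h21.le.trans h1a
  obtain ⟨hW1, hF1, hR1⟩ := H.props h10 h12 hα₂a
  obtain ⟨hWb, hFb, hRb⟩ := H.props h10 (h12.trans hα₂b) h1a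
  obtain ⟨hW2b, hF2b, hR2b⟩ := H.props h20 hα₂b h1a
  -- r ≤ R(α₂,b)
  have hr2 : ∀ c : ℝ, 0 ≤ c → Rq w g α₂ b ≤ ENNReal.ofReal c →
      primR g α₂ - primR g α₁ ≤ c * (primW w α₂ - primW w α₁) := by
    intro c hc hcb
    rw [hR2b c hc] at hcb
    by_contra hcon
    push Not at hcon
    set r := (Rq w g α₁ b).toReal with hr
    have hrE : ENNReal.ofReal r = Rq w g α₁ b :=
      ENNReal.ofReal_toReal (H.Rq_ne_top h10 (h12.trans hα₂b) h1a)
    have hr0 : 0 ≤ r := ENNReal.toReal_nonneg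
    have e1 := (hR1 r hr0).1 (by rw [hrE]; exact h1t α₂ h12 h21)
    have hlt : c < r := by
      by_contra hcr
      push Not at hcr
      nlinarith
    -- r is the exact value
    have e2 : ¬ (Rq w g α₁ b ≤ ENNReal.ofReal c) := by
      rw [← hrE, ENNReal.ofReal_le_ofReal_iff hc]; exact not_le.2 hlt
    have e3 : r * (primW w b - primW w α₁) ≤ primR g b - primR g α₁ := by
      by_contra hcc
      push Not at hcc
      have hWp : 0 < primW w b - primW w α₁ := by linarith
      have hd := (hRb ((primR g b - primR g α₁) / (primW w b - primW w α₁))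
        (div_nonneg (by linarith) hWp.le)).2 (by rw [div_mul_cancel₀ _ hWp.ne'])
      rw [← hrE, ENNReal.ofReal_le_ofReal_iff (div_nonneg (by linarith) hWp.le),
        le_div_iff₀ hWp] at hd
      linarith
    nlinarith
  have key : ∀ q : ℝ, 0 ≤ q → RR w g α₁ β₂ < ENNReal.ofReal q → ∀ t : ℝ, α₂ < t →
      ENNReal.ofReal t < β₂ → Rq w g α₁ t ≤ ENNReal.ofReal q := by
    intro q hq0 hq t ht htb
    obtain ⟨hWt, hFt, hRt⟩ := H.props h20 ht (htb.le.trans h2a)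
    obtain ⟨-, -, hR1t⟩ := H.props h10 (h12.trans ht) (htb.le.trans h2a)
    rw [hR1t q hq0]
    set W1 := primW w α₂ - primW w α₁ with hW1d
    set F1 := primR g α₂ - primR g α₁ with hF1d
    set Wt := primW w t - primW w α₂ with hWtd
    have hWtp : 0 < Wt := by simp only [hWtd]; linarith
    set c := max q (q + (q * W1 - F1) / Wt) with hc
    have hc0 : 0 ≤ c := hq0.trans (le_max_left _ _)
    have hRR2 : RR w g α₂ β₂ ≤ ENNReal.ofReal c := by
      refine RR_transfer hq (h20.trans ht.le) htb ?_
      intro s hts hsb hs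
      obtain ⟨hWs, hFs, hRs⟩ := H.props h20 (ht.trans_le hts) (hsb.trans h2a)
      obtain ⟨-, -, hR1s⟩ := H.props h10 (h12.trans (ht.trans_le hts)) (hsb.trans h2a)
      have hWts : primW w t ≤ primW w s := by
        rcases hts.eq_or_lt with rfl | hlt
        · exact le_rfl
        · exact (H.props (h20.trans ht.le) hlt (hsb.trans h2a)).1.le
      rw [hR1s q hq0] at hs
      rw [hRs c hc0]
      have hs' : primR g s - primR g α₂ ≤ q * (primW w s - primW w α₂) + (q * W1 - F1) := by
        simp only [hW1d, hF1d]; linarith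
      rcases le_total (q * W1 - F1) 0 with hn | hn
      · have : q ≤ c := le_max_left _ _
        nlinarith
      · have h3 : q + (q * W1 - F1) / Wt ≤ c := le_max_right _ _
        have h4 : q * W1 - F1 = (q * W1 - F1) / Wt * Wt := by rw [div_mul_cancel₀ _ hWtp.ne']
        have h5 : 0 ≤ (q * W1 - F1) / Wt := div_nonneg hn hWtp.le
        have h6 : (q * W1 - F1) / Wt * Wt ≤ (q * W1 - F1) / Wt * (primW w s - primW w α₂) := by
          apply mul_le_mul_of_nonneg_left _ h5
          simp only [hWtd]; linarith
        have h7 : (q + (q * W1 - F1) / Wt) * (primW w s - primW w α₂) ≤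
          c * (primW w s - primW w α₂) := by
          apply mul_le_mul_of_nonneg_right h3; linarith
        linarith
    have e1 : F1 ≤ c * W1 := hr2 c hc0 ((h2t b hα₂b hb).trans hRR2)
    have e2 := (hRt c hc0).1 ((h2t t ht htb).trans hRR2)
    have hgoal : primR g t - primR g α₂ + F1 ≤ q * (Wt + W1) := by
      rcases le_total (q * W1 - F1) 0 with hn | hn
      · have : (q * W1 - F1) / Wt ≤ 0 := div_nonpos_of_nonpos_of_nonneg hn hWtp.le
        have hcq : c = q := max_eq_left (by linarith)
        rw [hcq] at e1 e2
        linarith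
      · have h5 : 0 ≤ (q * W1 - F1) / Wt := div_nonneg hn hWtp.le
        have hcq : c = q + (q * W1 - F1) / Wt := max_eq_right (by linarith)
        have h4 : q * W1 - F1 = (q * W1 - F1) / Wt * Wt := by rw [div_mul_cancel₀ _ hWtp.ne']
        rw [hcq] at e2
        linarith
    simp only [hWtd, hW1d, hF1d] at hgoal
    linarith
  have key2 : ∀ t : ℝ, α₂ < t → ENNReal.ofReal t < β₂ → Rq w g α₁ t ≤ RR w g α₁ β₂ := by
    intro t ht htb
    apply le_of_forall_gt_imp_ge_of_dense
    intro q hq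
    by_cases hqt : q = ∞
    · rw [hqt]; exact le_top
    · rw [← ENNReal.ofReal_toReal hqt] at hq ⊢
      exact key _ ENNReal.toReal_nonneg hq t ht htb
  have hrb := key2 b hα₂b hb
  refine ⟨h10, h11.trans hb, h2a, h1p.trans_le hrb, fun t ht htb => ?_⟩
  rcases lt_or_ge α₂ t with h | h
  · exact key2 t h htb
  · refine (h1t t ht ?_).trans hrb
    exact (ENNReal.ofReal_le_ofReal h).trans_lt h21

/-- the open interval `(α, β)` -/
def Jset (p : ℝ × ℝ≥0∞) : Set ℝ := {t : ℝ | p.1 < t ∧ ENNReal.ofReal t < p.2}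

theorem LocFin.disj {a : ℝ≥0∞} {w : ℝ → ℝ} {g : ℝ → ℝ≥0∞} (H : LocFin a w g)
    {p q : ℝ × ℝ≥0∞} (hp : IsMaxLevelInterval a w g p.1 p.2)
    (hq : IsMaxLevelInterval a w g q.1 q.2) {t : ℝ} (htp : t ∈ Jset p) (htq : t ∈ Jset q) :
    p = q := by
  have main : ∀ p q : ℝ × ℝ≥0∞, IsMaxLevelInterval a w g p.1 p.2 →
      IsMaxLevelInterval a w g q.1 q.2 → t ∈ Jset p → t ∈ Jset q → p.1 ≤ q.1 → p = q := by
    intro p q hp hq htp htq hle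
    rcases le_or_gt q.2 p.2 with h | h
    · obtain ⟨e1, e2⟩ := hq.2 _ _ hp.1 hle h
      exact Prod.ext e1 e2
    rcases hle.eq_or_lt with he | hlt
    · obtain ⟨e1, e2⟩ := hp.2 _ _ hq.1 he.ge h.le
      exact Prod.ext e1.symm e2.symm
    · have hu := H.union hp.1 hq.1 hlt
        ((ENNReal.ofReal_le_ofReal htq.1.le).trans_lt htp.2) h
      obtain ⟨e1, e2⟩ := hp.2 _ _ hu le_rfl h.le
      exact absurd e2 h.ne'
  rcases le_total p.1 q.1 with h | h
  · exact main p q hp hq htp htq h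
  · exact (main q p hq hp htq htp h).symm

theorem isOpen_Jset (p : ℝ × ℝ≥0∞) : IsOpen (Jset p) :=
  isOpen_Ioi.inter (isOpen_Iio.preimage ENNReal.continuous_ofReal)

theorem per_interval {a : ℝ≥0∞} {w : ℝ → ℝ} {g : ℝ → ℝ≥0∞} (H : LocFin a w g)
    {α : ℝ} {β : ℝ≥0∞} (h : IsLevelInterval a w g α β) (l : ℝ) (hl : 0 < l) :
    ∫⁻ t in Jset (α, β), (RR w g α β * ENNReal.ofReal (w t) - ENNReal.ofReal (l * w t)) ≤
      ∫⁻ t in Jset (α, β), (g t - ENNReal.ofReal (l * w t)) := by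
  obtain ⟨h0, h1, h2, h3, h4⟩ := h
  have hwE := H.meas.ennreal_ofReal
  simp only [ENNReal.ofReal_mul hl.le]
  have hL : ∫⁻ t in Jset (α, β), (RR w g α β * ENNReal.ofReal (w t)
      - ENNReal.ofReal l * ENNReal.ofReal (w t)) =
      (RR w g α β - ENNReal.ofReal l) * ∫⁻ t in Jset (α, β), ENNReal.ofReal (w t) := by
    rw [← lintegral_const_mul _ hwE]
    apply lintegral_congr; intro t
    rw [ENNReal.sub_mul]; intros; exact ENNReal.ofReal_ne_top
  rw [hL]
  have step : ∀ (s : ℝ) (c : ℝ≥0∞), Set.Ioo α s ⊆ Jset (α, β) → ENNReal.ofReal s ≤ β → c ≤ Rq w g α s →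
      (c - ENNReal.ofReal l) * ∫⁻ t in Set.Ioo α s, ENNReal.ofReal (w t) ≤
      ∫⁻ t in Jset (α, β), (g t - ENNReal.ofReal l * ENNReal.ofReal (w t)) := by
    intro s c hs hsb hc
    have e1 : c * ∫⁻ t in Set.Ioo α s, ENNReal.ofReal (w t) ≤ ∫⁻ t in Set.Ioo α s, g t :=
      ENNReal.mul_le_of_le_div hc
    calc (c - ENNReal.ofReal l) * ∫⁻ t in Set.Ioo α s, ENNReal.ofReal (w t)
        ≤ c * (∫⁻ t in Set.Ioo α s, ENNReal.ofReal (w t))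
          - ENNReal.ofReal l * ∫⁻ t in Set.Ioo α s, ENNReal.ofReal (w t) := by
          have hi : ∫⁻ t in Set.Ioo α s, ENNReal.ofReal (w t) ≠ ∞ := by
            rcases le_or_gt s 0 with hs0 | hs0
            · rw [Set.Ioo_eq_empty (by linarith)]; simp
            · exact ne_top_of_le_ne_top (H.finW s hs0 (hsb.trans h2))
                (lintegral_mono_set (Set.Ioo_subset_Ioo_left h0))
          rw [ENNReal.sub_mul]; intros; exact hi
      _ ≤ (∫⁻ t in Set.Ioo α s, g t) - ∫⁻ t in Set.Ioo α s, ENNReal.ofReal l * ENNReal.ofReal (w t) := by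
          rw [lintegral_const_mul _ hwE]
          gcongr
      _ ≤ ∫⁻ t in Set.Ioo α s, (g t - ENNReal.ofReal l * ENNReal.ofReal (w t)) :=
          lintegral_sub_le _ _ (hwE.const_mul _)
      _ ≤ _ := lintegral_mono_set hs
  by_cases hb : β = ∞
  · subst hb
    have hIoo : ∀ s, Set.Ioo α s ⊆ Jset (α, ∞) := fun s x hx => ⟨hx.1, by simp⟩
    apply ENNReal.mul_le_of_forall_lt
    intro c hc b hbW
    have hJ : Jset (α, ∞) = ⋃ n : ℕ, Set.Ioo α (n : ℝ) := by
      ext x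
      simp only [Jset, mem_ofPred_eq, mem_iUnion, mem_Ioo]
      constructor
      · rintro ⟨hx, _⟩
        obtain ⟨n, hn⟩ := exists_nat_gt x
        exact ⟨n, hx, hn⟩
      · rintro ⟨n, hx, _⟩
        exact ⟨hx, by simp⟩
    rw [hJ, setLIntegral_iUnion_of_directed] at hbW
    · obtain ⟨n, hn⟩ := lt_iSup_iff.1 hbW
      have hcR : c + ENNReal.ofReal l < RR w g α ∞ := lt_tsub_iff_right.1 hc
      simp only [RR, if_true] at hcR
      obtain ⟨s, hs, hns⟩ := ((frequently_lt_of_lt_limsup (by isBoundedDefault) hcR).and_eventually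
        (eventually_ge_atTop (n : ℝ))).exists
      refine le_trans ?_ (step s _ (hIoo s) le_top hs.le)
      rw [ENNReal.add_sub_cancel_right ENNReal.ofReal_ne_top]
      gcongr
      exact hn.le.trans (lintegral_mono_set (Set.Ioo_subset_Ioo_right hns))
    · apply Monotone.directed_le
      intro m n hmn
      exact Set.Ioo_subset_Ioo_right (by exact_mod_cast hmn)
  · have hJ : Jset (α, β) = Set.Ioo α β.toReal := by
      ext x
      simp only [Jset, mem_ofPred_eq, mem_Ioo]
      refine and_congr_right fun hx => ?_
      exact ENNReal.ofReal_lt_iff_lt_toReal (h0.trans hx.le) hb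
    have := step β.toReal (RR w g α β) hJ.ge (by rw [ENNReal.ofReal_toReal hb]) (by simp [RR, hb])
    rwa [← hJ] at this

theorem measurableSet_Iset (a : ℝ≥0∞) : MeasurableSet (Iset a) :=
  (isOpen_Jset (0, a)).measurableSet

theorem levelFun_of_mem {a : ℝ≥0∞} {w : ℝ → ℝ} {g : ℝ → ℝ≥0∞} (H : LocFin a w g)
    {p : ℝ × ℝ≥0∞} (hp : IsMaxLevelInterval a w g p.1 p.2) {t : ℝ} (ht : t ∈ Jset p) :
    levelFun a w g t = RR w g p.1 p.2 * ENNReal.ofReal (w t) := by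
  have h : ∃ α β, IsMaxLevelInterval a w g α β ∧ α < t ∧ ENNReal.ofReal t < β :=
    ⟨p.1, p.2, hp, ht⟩
  unfold levelFun
  rw [dif_pos h]
  have hs := h.choose_spec.choose_spec
  have := H.disj hp (q := (h.choose, h.choose_spec.choose)) hs.1 ht hs.2
  rw [this]

theorem levelFun_of_notMem {a : ℝ≥0∞} {w : ℝ → ℝ} {g : ℝ → ℝ≥0∞} {t : ℝ}
    (ht : ∀ p : ℝ × ℝ≥0∞, IsMaxLevelInterval a w g p.1 p.2 → t ∉ Jset p) :
    levelFun a w g t = g t := by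
  unfold levelFun
  rw [dif_neg]
  rintro ⟨α, β, h, h'⟩
  exact ht (α, β) h h'

/-- the set of maximal level intervals -/
def maxSet (a : ℝ≥0∞) (w : ℝ → ℝ) (g : ℝ → ℝ≥0∞) : Set (ℝ × ℝ≥0∞) :=
  {p | IsMaxLevelInterval a w g p.1 p.2}

theorem maxSet_disj {a : ℝ≥0∞} {w : ℝ → ℝ} {g : ℝ → ℝ≥0∞} (H : LocFin a w g) :
    (maxSet a w g).PairwiseDisjoint Jset := by
  intro p hp q hq hpq
  rw [Function.onFun, Set.disjoint_left]
  intro t ht ht'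
  exact hpq (H.disj hp hq ht ht')

theorem maxSet_countable {a : ℝ≥0∞} {w : ℝ → ℝ} {g : ℝ → ℝ≥0∞} (H : LocFin a w g) :
    (maxSet a w g).Countable := by
  apply (maxSet_disj H).countable_of_isOpen (fun p _ => isOpen_Jset p)
  intro p hp
  have h1 := hp.1.2.1
  have h0 := hp.1.1
  obtain ⟨c, hc1, hc2⟩ := exists_between h1
  have hct : c ≠ ∞ := hc2.ne_top
  refine ⟨c.toReal, (ENNReal.ofReal_lt_iff_lt_toReal h0 hct).1 hc1, ?_⟩
  rw [ENNReal.ofReal_toReal hct]; exact hc2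

theorem levelFun_measurable {a : ℝ≥0∞} {w : ℝ → ℝ} {g : ℝ → ℝ≥0∞} (H : LocFin a w g)
    (hg : Measurable g) : Measurable (levelFun a w g) := by
  have hc : Countable (maxSet a w g) := (maxSet_countable H).to_subtype
  intro s hs
  have : levelFun a w g ⁻¹' s = (⋃ p : maxSet a w g,
      Jset p ∩ (fun t => RR w g p.1.1 p.1.2 * ENNReal.ofReal (w t)) ⁻¹' s) ∪
      ((⋃ p : maxSet a w g, Jset p)ᶜ ∩ g ⁻¹' s) := by
    ext t
    by_cases ht : ∃ p : maxSet a w g, t ∈ Jset p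
    · obtain ⟨p, hp⟩ := ht
      simp only [mem_preimage, mem_union, mem_iUnion, mem_inter_iff, mem_compl_iff]
      rw [levelFun_of_mem H p.2 hp]
      constructor
      · intro h; exact Or.inl ⟨p, hp, h⟩
      · rintro (⟨q, hq, h⟩ | ⟨h, _⟩)
        · have : p.1 = q.1 := H.disj p.2 q.2 hp hq
          rw [this]; exact h
        · exact absurd ⟨p, hp⟩ h
    · simp only [mem_preimage, mem_union, mem_iUnion, mem_inter_iff, mem_compl_iff]
      rw [levelFun_of_notMem (fun p hp h => ht ⟨⟨p, hp⟩, h⟩)]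
      constructor
      · intro h; exact Or.inr ⟨ht, h⟩
      · rintro (⟨q, hq, h⟩ | ⟨_, h⟩)
        · exact absurd ⟨q, hq⟩ ht
        · exact h
  rw [this]
  have hJ : ∀ p : maxSet a w g, MeasurableSet (Jset p) := fun p => (isOpen_Jset p).measurableSet
  refine MeasurableSet.union (MeasurableSet.iUnion fun p => (hJ p).inter ?_)
    ((MeasurableSet.iUnion hJ).compl.inter (hg hs))
  exact (H.meas.ennreal_ofReal.const_mul _) hs

theorem level_ineq {a : ℝ≥0∞} {w : ℝ → ℝ} {g : ℝ → ℝ≥0∞} (H : LocFin a w g) (l : ℝ) (hl : 0 < l) :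
    ∫⁻ t in Iset a, (levelFun a w g t - ENNReal.ofReal (l * w t)) ≤
      ∫⁻ t in Iset a, (g t - ENNReal.ofReal (l * w t)) := by
  set U := ⋃ p ∈ maxSet a w g, Jset p with hU
  have hJ : ∀ p ∈ maxSet a w g, MeasurableSet (Jset p) := fun p _ => (isOpen_Jset p).measurableSet
  have hUm : MeasurableSet U := MeasurableSet.biUnion (maxSet_countable H) hJ
  have hUI : Iset a ∩ U = U := by
    apply inter_eq_right.2
    apply iUnion₂_subset
    intro p hp t ht
    exact ⟨hp.1.1.trans_lt ht.1, ht.2.trans_le hp.1.2.2.1⟩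
  rw [← lintegral_inter_add_sdiff _ _ hUm, ← lintegral_inter_add_sdiff (fun t => g t - _) _ hUm, hUI]
  apply add_le_add
  · rw [hU, lintegral_biUnion (maxSet_countable H) hJ (maxSet_disj H),
      lintegral_biUnion (maxSet_countable H) hJ (maxSet_disj H)]
    apply ENNReal.tsum_le_tsum
    intro p
    refine le_trans (le_of_eq ?_) (per_interval H p.2.1 l hl)
    apply setLIntegral_congr_fun (hJ p p.2)
    intro t ht
    simp only
    rw [levelFun_of_mem H p.2 ht]
  · apply le_of_eq
    apply setLIntegral_congr_fun ((measurableSet_Iset a).diff hUm)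
    intro t ht
    simp only
    rw [levelFun_of_notMem]
    intro p hp h
    exact ht.2 (mem_biUnion hp h)

theorem locFin_of {a : ℝ≥0∞} {w : ℝ → ℝ} {g : ℝ → ℝ≥0∞}
    (hw_pos : ∀ x ∈ Iset a, 0 < w x) (hw_anti : AntitoneOn w (Iset a)) (hw_meas : Measurable w)
    (hW_fin : ∀ t ∈ Iset a, ∫⁻ s in Set.Ioo 0 t, ENNReal.ofReal (w s) ≠ ∞)
    (l : ℝ) (hl : 0 < l) (hfin : ∫⁻ t in Iset a, (g t - ENNReal.ofReal (l * w t)) ≠ ∞) :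
    LocFin a w g := by
  have hW : ∀ t, 0 < t → ENNReal.ofReal t ≤ a → ∫⁻ s in Set.Ioo 0 t, ENNReal.ofReal (w s) ≠ ∞ := by
    intro t ht hta
    have hm : t / 2 ∈ Iset a := subset_Iset le_rfl hta ⟨by positivity, by linarith⟩
    rw [split_Ioo _ (t / 2) t (by positivity) (by linarith)]
    refine ENNReal.add_ne_top.2 ⟨hW_fin _ hm, ?_⟩
    have : ∫⁻ s in Set.Ioo (t / 2) t, ENNReal.ofReal (w s) ≤
        ∫⁻ s in Set.Ioo (t / 2) t, ENNReal.ofReal (w (t / 2)) := by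
      apply setLIntegral_mono' measurableSet_Ioo
      intro s hs
      exact ENNReal.ofReal_le_ofReal (hw_anti hm (subset_Iset (by positivity) hta hs) hs.1.le)
    refine ne_top_of_le_ne_top ?_ this
    simp [ENNReal.mul_eq_top]
  refine ⟨hw_pos, hw_meas, hW, fun t ht hta => ?_⟩
  have : ∫⁻ s in Set.Ioo 0 t, g s ≤ (∫⁻ s in Set.Ioo 0 t, (g s - ENNReal.ofReal (l * w s))) +
      ∫⁻ s in Set.Ioo 0 t, ENNReal.ofReal (l * w s) := by
    rw [← lintegral_add_right _ (hw_meas.const_mul l).ennreal_ofReal]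
    exact lintegral_mono fun s => le_tsub_add
  refine ne_top_of_le_ne_top (ENNReal.add_ne_top.2 ⟨?_, ?_⟩) this
  · exact ne_top_of_le_ne_top hfin (lintegral_mono_set (subset_Iset le_rfl hta))
  · simp only [ENNReal.ofReal_mul hl.le]
    rw [lintegral_const_mul _ hw_meas.ennreal_ofReal]
    exact ENNReal.mul_ne_top ENNReal.ofReal_ne_top (hW t ht hta)

theorem omega_int {a : ℝ≥0∞} {w : ℝ → ℝ} {g : ℝ → ℝ≥0∞} (hg : Measurable g)
    (hw_pos : ∀ x ∈ Iset a, 0 < w x) (hw_meas : Measurable w) (l : ℝ) (hl : 0 < l) :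
    ∫⁻ x, (g x / ENNReal.ofReal (w x) - ENNReal.ofReal l) ∂(wMeas (Iset a) w) =
      ∫⁻ t in Iset a, (g t - ENNReal.ofReal (l * w t)) := by
  unfold wMeas
  have hm : Measurable (fun x => g x / ENNReal.ofReal (w x) - ENNReal.ofReal l) :=
    (hg.div hw_meas.ennreal_ofReal).sub_const _
  rw [lintegral_withDensity_eq_lintegral_mul _ hw_meas.ennreal_ofReal hm]
  apply setLIntegral_congr_fun (measurableSet_Iset a)
  intro t ht
  have hp : ENNReal.ofReal (w t) ≠ 0 := (ENNReal.ofReal_pos.2 (hw_pos t ht)).ne'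
  simp only [Pi.mul_apply]
  rw [ENNReal.mul_sub (by intros; exact ENNReal.ofReal_ne_top),
    ENNReal.mul_div_cancel hp ENNReal.ofReal_ne_top, mul_comm, ENNReal.ofReal_mul hl.le]

/-- If `f*/w ∈ L₁+L∞(ω)` then the level function `f⁰` of `f` w.r.t. `w`
satisfies `∫_I (f⁰ − λw)₊ ≤ ∫_I (f* − λw)₊` for all `λ > 0`, and consequently
`(f⁰/w)^{*,w} ≺ (f*/w)^{*,w}` on `(0, W(a))`. -/
theorem stmt_10 (a : ℝ≥0∞) (ha : 0 < a) (w f : ℝ → ℝ)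
    (hw_pos : ∀ x ∈ Iset a, 0 < w x) (hw_anti : AntitoneOn w (Iset a)) (hw_meas : Measurable w)
    (hW_fin : ∀ t ∈ Iset a, ∫⁻ s in Set.Ioo 0 t, ENNReal.ofReal (w s) ≠ ∞)
    (hf_meas : Measurable f)
    (hL1Linf : ∀ x : ℝ, 0 < x →
      ∫⁻ t in Set.Ioo 0 x,
          rearrE (wMeas (Iset a) w) (fun s => rearr (volI a) f s / ENNReal.ofReal (w s)) t ≠ ∞) :
    (∀ lam : ℝ, 0 < lam →
      ∫⁻ t in Iset a,
          (levelFun a w (rearr (volI a) f) t - ENNReal.ofReal (lam * w t))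
        ≤ ∫⁻ t in Iset a, (rearr (volI a) f t - ENNReal.ofReal (lam * w t))) ∧
    (∀ x : ℝ, 0 < x → ENNReal.ofReal x < bval a w →
      ∫⁻ t in Set.Ioo 0 x,
          rearrE (wMeas (Iset a) w)
            (fun s => levelFun a w (rearr (volI a) f) s / ENNReal.ofReal (w s)) t
        ≤ ∫⁻ t in Set.Ioo 0 x,
            rearrE (wMeas (Iset a) w) (fun s => rearr (volI a) f s / ENNReal.ofReal (w s)) t) := by
  have hgm : Measurable (rearr (volI a) f) :=
    (rearrE_antitone (volI a) (fun x => ENNReal.ofReal |f x|)).measurable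
  have : SFinite (wMeas (Iset a) w) := by unfold wMeas; infer_instance
  have hkm : Measurable (fun s => rearr (volI a) f s / ENNReal.ofReal (w s)) :=
    hgm.div hw_meas.ennreal_ofReal
  obtain ⟨l₀, hl₀, hfin⟩ := sub_fin (wMeas (Iset a) w) _ hkm (hL1Linf 1 one_pos)
  rw [omega_int hgm hw_pos hw_meas l₀ hl₀] at hfin
  have H := locFin_of hw_pos hw_anti hw_meas hW_fin l₀ hl₀ hfin
  have hlm := levelFun_measurable H hgm
  refine ⟨fun l hl => level_ineq H l hl, fun x hx _ => ?_⟩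
  have hlm' : Measurable (fun s => levelFun a w (rearr (volI a) f) s / ENNReal.ofReal (w s)) :=
    hlm.div hw_meas.ennreal_ofReal
  apply hlp _ _ _ hlm' hkm _ x hx
  intro l hl
  rw [omega_int hgm hw_pos hw_meas l hl, omega_int hlm hw_pos hw_meas l hl]
  exact level_ineq H l hl
end

section
/- Let w be a non-increasing positive function on I=(0,a), 0<a≤∞, with W(t)=∫₀ᵗ w dm finite on I, and let h, k : I → [0,∞) be locally integrable functions such that h/w and k/w are non-increasing on I. Then ∫₀ˣ h dm ≤ ∫₀ˣ k dm for every x∈I if and only if ∫₀ˣ (h/w)^{*,w} dm ≤ ∫₀ˣ (k/w)^{*,w} dm for every x ∈ (0, W(a)), where (·)^{*,w} denotes the decreasing rearrangement with respect to the measure w·dm. -/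
open MeasureTheory Set Filter
open scoped ENNReal

section aux
variable {a : ℝ≥0∞} {w : ℝ → ℝ}

noncomputable def Vf (a : ℝ≥0∞) (w : ℝ → ℝ) (t : ℝ) : ℝ := (wMeas (Iset a) w (Iio t)).toReal

lemma isOpen_Iset : IsOpen (Iset a) :=
  (isOpen_lt continuous_const continuous_id).inter
    (isOpen_lt ENNReal.continuous_ofReal continuous_const)

lemma Iset_down {x y : ℝ} (hx : x ∈ Iset a) (hy : 0 < y) (hyx : y ≤ x) : y ∈ Iset a :=
  ⟨hy, (ENNReal.ofReal_le_ofReal hyx).trans_lt hx.2⟩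

lemma Ioo_sub {x : ℝ} (hx : x ∈ Iset a) : Ioo 0 x ⊆ Iset a :=
  fun _ hy => Iset_down hx hy.1 hy.2.le

lemma wMeas_apply (S : Set ℝ) (hS : MeasurableSet S) :
    wMeas (Iset a) w S = ∫⁻ s in S ∩ Iset a, ENNReal.ofReal (w s) := by
  rw [wMeas, withDensity_apply _ hS, Measure.restrict_restrict hS]

lemma inter_Iio {x : ℝ} (hx : x ∈ Iset a) : Iio x ∩ Iset a = Ioo 0 x := by
  ext y
  exact ⟨fun h => ⟨h.2.1, h.1⟩, fun h => ⟨h.2, Ioo_sub hx h⟩⟩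

lemma wMeas_Iio {x : ℝ} (hx : x ∈ Iset a) :
    wMeas (Iset a) w (Iio x) = ∫⁻ s in Ioo 0 x, ENNReal.ofReal (w s) := by
  rw [wMeas_apply _ measurableSet_Iio, inter_Iio hx]

lemma wMeas_Ioo {x : ℝ} (hx : x ∈ Iset a) :
    wMeas (Iset a) w (Ioo 0 x) = ∫⁻ s in Ioo 0 x, ENNReal.ofReal (w s) := by
  rw [wMeas_apply _ measurableSet_Ioo, inter_eq_left.2 (Ioo_sub hx)]

instance wMeas_nullSingleton : NullSingletonClass (wMeas (Iset a) w) := by unfold wMeas; infer_instance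

lemma wMeas_univ : wMeas (Iset a) w univ = bval a w := by
  rw [wMeas_apply _ MeasurableSet.univ, univ_inter, bval]

lemma wMeas_eq_bval_inter (S : Set ℝ) (hS : MeasurableSet S) :
    wMeas (Iset a) w S = wMeas (Iset a) w (S ∩ Iset a) := by
  rw [wMeas_apply _ hS, wMeas_apply _ (hS.inter isOpen_Iset.measurableSet), inter_assoc, inter_self]

lemma ofReal_Vf (hW_fin : ∀ t ∈ Iset a, ∫⁻ s in Set.Ioo 0 t, ENNReal.ofReal (w s) ≠ ∞)
    {x : ℝ} (hx : x ∈ Iset a) : ENNReal.ofReal (Vf a w x) = wMeas (Iset a) w (Iio x) := by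
  rw [Vf, ENNReal.ofReal_toReal]
  rw [wMeas_Iio hx]; exact hW_fin x hx

lemma Vf_measurable : Measurable (Vf a w) := by
  have : Monotone fun t => wMeas (Iset a) w (Iio t) :=
    fun _ _ h => measure_mono (Iio_subset_Iio h)
  exact this.measurable.ennreal_toReal

lemma wMeas_Ioo_pos (hw_pos : ∀ x ∈ Iset a, 0 < w x) (hw_meas : Measurable w)
    {x y : ℝ} (hx : 0 ≤ x) (hy : y ∈ Iset a) (hxy : x < y) : 0 < wMeas (Iset a) w (Ioo x y) := by
  have hsub : Ioo x y ⊆ Iset a := (Ioo_subset_Ioo_left hx).trans (Ioo_sub hy)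
  rw [wMeas_apply _ measurableSet_Ioo, inter_eq_left.2 hsub,
    setLIntegral_pos_iff hw_meas.ennreal_ofReal]
  have : (Function.support fun s => ENNReal.ofReal (w s)) ∩ Ioo x y = Ioo x y := by
    apply inter_eq_right.2
    intro z hz
    simpa using hw_pos z (hsub hz)
  rw [this]; simpa using hxy

lemma Vf_strict (hw_pos : ∀ x ∈ Iset a, 0 < w x) (hw_meas : Measurable w)
    (hW_fin : ∀ t ∈ Iset a, ∫⁻ s in Set.Ioo 0 t, ENNReal.ofReal (w s) ≠ ∞)
    {x y : ℝ} (hx : x ∈ Iset a) (hy : y ∈ Iset a) (hxy : x < y) : 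
    wMeas (Iset a) w (Iio x) < wMeas (Iset a) w (Iio y) := by
  have h1 : wMeas (Iset a) w (Iio x) + wMeas (Iset a) w (Ioo x y) ≤ wMeas (Iset a) w (Iio y) := by
    rw [← measure_union _ measurableSet_Ioo]
    · apply measure_mono
      rintro z (hz | hz)
      · exact lt_trans hz hxy
      · exact hz.2
    · exact Set.disjoint_left.2 fun z h1 h2 => lt_asymm h1 h2.1
  refine lt_of_lt_of_le (ENNReal.lt_add_right ?_ (wMeas_Ioo_pos hw_pos hw_meas hx.1.le hy hxy).ne') h1
  rw [wMeas_Iio hx]; exact hW_fin x hx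

lemma exists_big (ha : 0 < a) {t : ℝ} (ht : ENNReal.ofReal t < bval a w) :
    ∃ s ∈ Iset a, ENNReal.ofReal t < wMeas (Iset a) w (Iio s) := by
  by_contra! hcon
  obtain ⟨u, hu, hua, hlim⟩ := exists_seq_strictMono_tendsto' ha
  have hI : Iset a = ⋃ n, Ioo 0 (u n).toReal := by
    ext y
    simp only [mem_iUnion]
    constructor
    · rintro ⟨hy0, hya⟩
      obtain ⟨n, hn⟩ := (hlim.eventually (lt_mem_nhds hya)).exists
      exact ⟨n, hy0, (ENNReal.ofReal_lt_iff_lt_toReal hy0.le (hua n).2.ne_top).1 hn⟩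
    · rintro ⟨n, hy0, hyn⟩
      exact ⟨hy0, ((ENNReal.ofReal_lt_iff_lt_toReal hy0.le (hua n).2.ne_top).2 hyn).trans (hua n).2⟩
  have hmono : Monotone fun n => Ioo 0 (u n).toReal := by
    intro n m hnm
    exact Ioo_subset_Ioo_right (ENNReal.toReal_mono (hua m).2.ne_top (hu.monotone hnm))
  have h1 : wMeas (Iset a) w (Iset a) ≤ ENNReal.ofReal t := by
    have : wMeas (Iset a) w (⋃ n, Ioo 0 (u n).toReal) ≤ ENNReal.ofReal t := by
      rw [hmono.measure_iUnion]
      refine iSup_le fun n => (measure_mono ?_).trans (hcon (u n).toReal ⟨?_, ?_⟩)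
      · exact fun z hz => hz.2
      · exact ENNReal.toReal_pos (hua n).1.ne' (hua n).2.ne_top
      · rw [ENNReal.ofReal_toReal (hua n).2.ne_top]; exact (hua n).2
    rwa [← hI] at this
  rw [← wMeas_univ, wMeas_eq_bval_inter _ MeasurableSet.univ, univ_inter] at ht
  exact absurd h1 ht.not_ge

lemma Vf_surj (ha : 0 < a) (hw_pos : ∀ x ∈ Iset a, 0 < w x) (hw_meas : Measurable w)
    (hW_fin : ∀ t ∈ Iset a, ∫⁻ s in Set.Ioo 0 t, ENNReal.ofReal (w s) ≠ ∞)
    {t : ℝ} (ht0 : 0 < t) (ht : ENNReal.ofReal t < bval a w) :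
    ∃ s ∈ Iset a, Vf a w s = t := by
  obtain ⟨b, hb, htb⟩ := exists_big ha ht
  have hint : IntegrableOn w (Icc 0 b) := by
    rw [integrableOn_Icc_iff_integrableOn_Ioo]
    refine ⟨hw_meas.aestronglyMeasurable, ?_⟩
    rw [hasFiniteIntegral_iff_ofReal]
    · exact (hW_fin b hb).lt_top
    · filter_upwards [ae_restrict_mem measurableSet_Ioo] with z hz
      exact (hw_pos z (Ioo_sub hb hz)).le
  have hcont := intervalIntegral.continuousOn_primitive hint
  have hV : ∀ s ∈ Icc 0 b, 0 < s → ∫ z in Ioc 0 s, w z = Vf a w s := by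
    intro s hs hs0
    have hsI := Iset_down hb hs0 hs.2
    rw [Vf, wMeas_Iio hsI, integral_Ioc_eq_integral_Ioo,
      integral_eq_lintegral_of_nonneg_ae _ hw_meas.aestronglyMeasurable]
    filter_upwards [ae_restrict_mem measurableSet_Ioo] with z hz
    exact (hw_pos z (Ioo_sub hsI hz)).le
  have hmem : t ∈ Icc (∫ z in Ioc 0 (0:ℝ), w z) (∫ z in Ioc 0 b, w z) := by
    refine ⟨by simpa using ht0.le, ?_⟩
    rw [hV b ⟨hb.1.le, le_rfl⟩ hb.1]
    rw [← ofReal_Vf hW_fin hb] at htb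
    exact (ENNReal.lt_ofReal_iff_toReal_lt ENNReal.ofReal_ne_top).1 htb |>.le |> fun h => by
      rwa [ENNReal.toReal_ofReal ht0.le] at h
  obtain ⟨s, hs, hst⟩ := intermediate_value_Icc hb.1.le hcont hmem
  have hs0 : 0 < s := by
    rcases hs.1.eq_or_lt with h | h
    · subst h; simp at hst; exact absurd hst ht0.ne
    · exact h
  exact ⟨s, Iset_down hb hs0 hs.2, by rw [← hV s hs hs0]; exact hst⟩

lemma Vf_lt_iff (hw_pos : ∀ x ∈ Iset a, 0 < w x) (hw_meas : Measurable w)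
    (hW_fin : ∀ t ∈ Iset a, ∫⁻ s in Set.Ioo 0 t, ENNReal.ofReal (w s) ≠ ∞) :
    StrictMonoOn (Vf a w) (Iset a) := by
  intro x hx y hy hxy
  have := Vf_strict hw_pos hw_meas hW_fin hx hy hxy
  rw [← ofReal_Vf hW_fin hx, ← ofReal_Vf hW_fin hy] at this
  exact (ENNReal.ofReal_lt_ofReal_iff_of_nonneg ENNReal.toReal_nonneg).1 this

lemma Vf_pos (hw_pos : ∀ x ∈ Iset a, 0 < w x) (hw_meas : Measurable w)
    (hW_fin : ∀ t ∈ Iset a, ∫⁻ s in Set.Ioo 0 t, ENNReal.ofReal (w s) ≠ ∞)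
    {x : ℝ} (hx : x ∈ Iset a) : 0 < Vf a w x := by
  rw [← ENNReal.ofReal_pos, ofReal_Vf hW_fin hx, wMeas_Iio hx, ← wMeas_Ioo hx]
  exact wMeas_Ioo_pos hw_pos hw_meas le_rfl hx hx.1

lemma Vf_lt_bval (hw_pos : ∀ x ∈ Iset a, 0 < w x) (hw_meas : Measurable w)
    (hW_fin : ∀ t ∈ Iset a, ∫⁻ s in Set.Ioo 0 t, ENNReal.ofReal (w s) ≠ ∞)
    {x : ℝ} (hx : x ∈ Iset a) : ENNReal.ofReal (Vf a w x) < bval a w := by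
  obtain ⟨y, hy, hyI⟩ : ∃ y, x < y ∧ y ∈ Iset a := by
    have h1 : Iset a ∈ nhdsWithin x (Ioi x) := mem_nhdsWithin_of_mem_nhds (isOpen_Iset.mem_nhds hx)
    obtain ⟨y, hy⟩ := (inter_mem self_mem_nhdsWithin h1 : Ioi x ∩ Iset a ∈ nhdsWithin x (Ioi x)) |>
      Filter.nonempty_of_mem
    exact ⟨y, hy⟩
  rw [ofReal_Vf hW_fin hx]
  refine (Vf_strict hw_pos hw_meas hW_fin hx hyI hy).trans_le ?_
  rw [← wMeas_univ]; exact measure_mono (subset_univ _)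

lemma map_Vf (ha : 0 < a) (hw_pos : ∀ x ∈ Iset a, 0 < w x) (hw_meas : Measurable w)
    (hW_fin : ∀ t ∈ Iset a, ∫⁻ s in Set.Ioo 0 t, ENNReal.ofReal (w s) ≠ ∞)
    {x : ℝ} (hx : x ∈ Iset a) :
    ((wMeas (Iset a) w).restrict (Ioo 0 x)).map (Vf a w) = volume.restrict (Ioo 0 (Vf a w x)) := by
  have hmono := Vf_lt_iff hw_pos hw_meas hW_fin
  have hfin : wMeas (Iset a) w (Ioo 0 x) = ENNReal.ofReal (Vf a w x) := by
    rw [ofReal_Vf hW_fin hx, wMeas_Iio hx, wMeas_Ioo hx]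
  haveI : IsFiniteMeasure ((wMeas (Iset a) w).restrict (Ioo 0 x)) :=
    ⟨by rw [Measure.restrict_apply_univ, hfin]; exact ENNReal.ofReal_lt_top⟩
  apply Measure.ext_of_Iic
  intro t
  rw [Measure.map_apply Vf_measurable measurableSet_Iic,
    Measure.restrict_apply (Vf_measurable measurableSet_Iic), Measure.restrict_apply measurableSet_Iic]
  rcases le_or_gt t 0 with ht | ht
  · have h1 : Vf a w ⁻¹' Iic t ∩ Ioo 0 x = ∅ := by
      ext z
      simp only [mem_inter_iff, mem_preimage, mem_Iic, mem_empty_iff_false, iff_false, not_and]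
      intro hz hz2
      have := Vf_pos hw_pos hw_meas hW_fin (Ioo_sub hx hz2)
      linarith
    have h2 : Iic t ∩ Ioo 0 (Vf a w x) = ∅ := by
      ext z
      simp only [mem_inter_iff, mem_Iic, mem_empty_iff_false, iff_false, not_and]
      intro hz hz2
      have := hz2.1
      linarith
    rw [h1, h2]; simp
  rcases le_or_gt (Vf a w x) t with ht2 | ht2
  · have h1 : Vf a w ⁻¹' Iic t ∩ Ioo 0 x = Ioo 0 x := by
      apply inter_eq_right.2
      intro z hz
      exact (hmono (Ioo_sub hx hz) hx hz.2).le.trans ht2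
    have h2 : Iic t ∩ Ioo 0 (Vf a w x) = Ioo 0 (Vf a w x) := by
      apply inter_eq_right.2
      intro z hz
      exact hz.2.le.trans ht2
    rw [h1, h2, hfin]; simp
  obtain ⟨s, hs, rfl⟩ := Vf_surj ha hw_pos hw_meas hW_fin ht
    ((ENNReal.ofReal_le_ofReal ht2.le).trans_lt (Vf_lt_bval hw_pos hw_meas hW_fin hx))
  have hsx : s < x := (hmono.lt_iff_lt hs hx).1 ht2
  have h1 : Vf a w ⁻¹' Iic (Vf a w s) ∩ Ioo 0 x = Ioc 0 s := by
    ext z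
    constructor
    · rintro ⟨h1, h2⟩
      exact ⟨h2.1, (hmono.le_iff_le (Ioo_sub hx h2) hs).1 h1⟩
    · intro hz
      have : z ∈ Ioo 0 x := ⟨hz.1, hz.2.trans_lt hsx⟩
      exact ⟨(hmono.le_iff_le (Ioo_sub hx this) hs).2 hz.2, this⟩
  have h2 : Iic (Vf a w s) ∩ Ioo 0 (Vf a w x) = Ioc 0 (Vf a w s) := by
    ext z
    exact ⟨fun h => ⟨h.2.1, h.1⟩, fun h => ⟨h.2, h.1, h.2.trans_lt ht2⟩⟩
  rw [h1, h2, ← measure_congr (Ioo_ae_eq_Ioc (μ := wMeas (Iset a) w)), wMeas_Ioo hs, ← wMeas_Iio hs,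
    ← ofReal_Vf hW_fin hs]
  simp

lemma rearr_antitone (μ : Measure ℝ) (f : ℝ → ℝ) : Antitone (rearr μ f) := by
  intro s t hst
  exact sInf_le_sInf fun r hr => ⟨hr.1, hr.2.trans (ENNReal.ofReal_le_ofReal hst)⟩

lemma rearr_eq (hw_pos : ∀ x ∈ Iset a, 0 < w x) (hw_meas : Measurable w)
    (hW_fin : ∀ t ∈ Iset a, ∫⁻ s in Set.Ioo 0 t, ENNReal.ofReal (w s) ≠ ∞)
    {g : ℝ → ℝ} (hg : Measurable g) (hg0 : ∀ x ∈ Iset a, 0 ≤ g x) (hanti : AntitoneOn g (Iset a))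
    {s : ℝ} (hs : s ∈ Iset a) (hc : ContinuousWithinAt g (Iset a) s) :
    rearr (wMeas (Iset a) w) g (Vf a w s) = ENNReal.ofReal (g s) := by
  have hmeas : ∀ r : ℝ≥0∞, MeasurableSet {x | r < ENNReal.ofReal |g x|} := fun r =>
    measurableSet_lt measurable_const (by fun_prop)
  apply le_antisymm
  · apply le_of_forall_gt
    intro r hr
    obtain ⟨q, hq1, hq2⟩ := exists_between hr
    refine lt_of_le_of_lt (sInf_le ⟨pos_of_gt hq1, ?_⟩) hq2
    rw [ofReal_Vf hW_fin hs, wMeas_eq_bval_inter _ (hmeas q)]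
    apply measure_mono
    rintro z ⟨hz, hzI⟩
    by_contra hzs
    have := hanti hs hzI (not_lt.1 hzs)
    have hz' : q < ENNReal.ofReal |g z| := hz
    rw [abs_of_nonneg (hg0 z hzI)] at hz'
    exact absurd (hz'.trans_le (ENNReal.ofReal_le_ofReal this)) hq1.not_gt
  · apply le_sInf
    rintro r ⟨hr0, hr⟩
    by_contra! hlt
    have hc' : ContinuousWithinAt (fun z => ENNReal.ofReal (g z)) (Iset a) s :=
      ENNReal.continuous_ofReal.continuousAt.comp_continuousWithinAt hc
    have hev : ∀ᶠ z in nhds s, r < ENNReal.ofReal (g z) := by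
      have := hc'.eventually (lt_mem_nhds hlt)
      rwa [isOpen_Iset.nhdsWithin_eq hs] at this
    have hev2 : ∀ᶠ z in nhdsWithin s (Ioi s), (r < ENNReal.ofReal (g z) ∧ z ∈ Iset a) ∧ z ∈ Ioi s :=
      ((hev.and (isOpen_Iset.mem_nhds hs)).filter_mono nhdsWithin_le_nhds).and self_mem_nhdsWithin
    obtain ⟨y, ⟨hy1, hyI⟩, hys⟩ := hev2.exists
    have h1 : wMeas (Iset a) w (Iio y) ≤ wMeas (Iset a) w {x | r < ENNReal.ofReal |g x|} := by
      rw [wMeas_Iio hyI, ← wMeas_Ioo hyI]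
      apply measure_mono
      intro z hz
      exact hy1.trans_le (ENNReal.ofReal_le_ofReal
        ((hanti (Ioo_sub hyI hz) hyI hz.2.le).trans (le_abs_self _)))
    have h2 := Vf_strict hw_pos hw_meas hW_fin hs hyI hys
    rw [ofReal_Vf hW_fin hs] at hr
    exact absurd (h2.trans_le h1) hr.not_gt

lemma key (ha : 0 < a) (hw_pos : ∀ x ∈ Iset a, 0 < w x) (hw_meas : Measurable w)
    (hW_fin : ∀ t ∈ Iset a, ∫⁻ s in Set.Ioo 0 t, ENNReal.ofReal (w s) ≠ ∞)
    {h : ℝ → ℝ} (hh : Measurable h) (hh0 : ∀ x ∈ Iset a, 0 ≤ h x)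
    (hanti : AntitoneOn (fun t => h t / w t) (Iset a)) {x : ℝ} (hx : x ∈ Iset a) :
    ∫⁻ t in Ioo 0 (Vf a w x), rearr (wMeas (Iset a) w) (fun s => h s / w s) t
      = ∫⁻ t in Ioo 0 x, ENNReal.ofReal (h t) := by
  have hg : Measurable fun t => h t / w t := hh.div hw_meas
  rw [← map_Vf ha hw_pos hw_meas hW_fin hx, lintegral_map (rearr_antitone _ _).measurable Vf_measurable]
  have hcount : {z ∈ Iset a | ¬ ContinuousWithinAt (fun t => h t / w t) (Iset a) z}.Countable :=
    hanti.countable_not_continuousWithinAt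
  have hae : ∀ᵐ z ∂((wMeas (Iset a) w).restrict (Ioo 0 x)),
      rearr (wMeas (Iset a) w) (fun s => h s / w s) (Vf a w z) = ENNReal.ofReal (h z / w z) := by
    filter_upwards [ae_restrict_mem measurableSet_Ioo, ae_restrict_of_ae (hcount.ae_notMem _)]
      with z hz hz2
    have hzI := Ioo_sub hx hz
    refine rearr_eq hw_pos hw_meas hW_fin hg
      (fun y hy => div_nonneg (hh0 y hy) (hw_pos y hy).le) hanti hzI ?_
    by_contra hcon
    exact hz2 ⟨hzI, hcon⟩
  rw [lintegral_congr_ae hae, wMeas, restrict_withDensity measurableSet_Ioo,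
    Measure.restrict_restrict measurableSet_Ioo, inter_eq_left.2 (Ioo_sub hx),
    lintegral_withDensity_eq_lintegral_mul _ hw_meas.ennreal_ofReal hg.ennreal_ofReal]
  refine setLIntegral_congr_fun measurableSet_Ioo fun z hz => ?_
  have hp := hw_pos z (Ioo_sub hx hz)
  simp only [Pi.mul_apply]
  rw [← ENNReal.ofReal_mul hp.le, mul_div_cancel₀ _ hp.ne']

end aux

/-- For locally integrable `h, k ≥ 0` on `I` with `h/w`, `k/w` non-increasing,
`∫₀ˣ h ≤ ∫₀ˣ k` for all `x ∈ I` iff `∫₀ˣ (h/w)^{*,w} ≤ ∫₀ˣ (k/w)^{*,w}` for all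
`x ∈ (0, W(a))`. -/
theorem stmt_11 (a : ℝ≥0∞) (ha : 0 < a) (w h k : ℝ → ℝ)
    (hw_pos : ∀ x ∈ Iset a, 0 < w x) (hw_anti : AntitoneOn w (Iset a)) (hw_meas : Measurable w)
    (hW_fin : ∀ t ∈ Iset a, ∫⁻ s in Set.Ioo 0 t, ENNReal.ofReal (w s) ≠ ∞)
    (hh_meas : Measurable h) (hk_meas : Measurable k)
    (hh0 : ∀ x ∈ Iset a, 0 ≤ h x) (hk0 : ∀ x ∈ Iset a, 0 ≤ k x)
    (hh_loc : ∀ x ∈ Iset a, ∫⁻ t in Set.Ioo 0 x, ENNReal.ofReal (h t) ≠ ∞)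
    (hk_loc : ∀ x ∈ Iset a, ∫⁻ t in Set.Ioo 0 x, ENNReal.ofReal (k t) ≠ ∞)
    (hh_anti : AntitoneOn (fun t => h t / w t) (Iset a))
    (hk_anti : AntitoneOn (fun t => k t / w t) (Iset a)) :
    (∀ x ∈ Iset a,
        ∫⁻ t in Set.Ioo 0 x, ENNReal.ofReal (h t) ≤ ∫⁻ t in Set.Ioo 0 x, ENNReal.ofReal (k t))
      ↔ (∀ x : ℝ, 0 < x → ENNReal.ofReal x < bval a w →
          ∫⁻ t in Set.Ioo 0 x, rearr (wMeas (Iset a) w) (fun s => h s / w s) t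
            ≤ ∫⁻ t in Set.Ioo 0 x, rearr (wMeas (Iset a) w) (fun s => k s / w s) t) := by
  constructor
  · intro H x hx0 hxb
    obtain ⟨s, hs, rfl⟩ := Vf_surj ha hw_pos hw_meas hW_fin hx0 hxb
    rw [key ha hw_pos hw_meas hW_fin hh_meas hh0 hh_anti hs,
      key ha hw_pos hw_meas hW_fin hk_meas hk0 hk_anti hs]
    exact H s hs
  · intro H x hx
    have := H _ (Vf_pos hw_pos hw_meas hW_fin hx) (Vf_lt_bval hw_pos hw_meas hW_fin hx)
    rwa [key ha hw_pos hw_meas hW_fin hh_meas hh0 hh_anti hx,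
      key ha hw_pos hw_meas hW_fin hk_meas hk0 hk_anti hx] at this
end

section
/- Let v, w be non-increasing positive functions on I=(0,a), 0<a≤∞, with ∫₀ˣ v dm ≤ ∫₀ˣ w dm < ∞ for every x∈I (i.e. v ≺ w), and let h : I → [0,∞) be non-increasing with ∫₀ˣ h^{*,w} dm < ∞ for all x. Then h^{*,v} ≺ h^{*,w}, i.e. for every x > 0, ∫₀ˣ h^{*,v} dm ≤ ∫₀ˣ h^{*,w} dm, where h^{*,v} and h^{*,w} denote the decreasing rearrangements of h with respect to the measures v·dm and w·dm respectively. -/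
open MeasureTheory Set Filter
open scoped ENNReal

lemma lower_ae_eq (a : ℝ≥0∞) (E : Set ℝ) (hE : E ⊆ Iset a)
    (hlow : ∀ y ∈ E, ∀ z, 0 < z → z < y → z ∈ E) :
    E =ᵐ[volume] (⋃ q ∈ {q : ℚ | (q : ℝ) ∈ E}, Ioo (0:ℝ) (q : ℝ)) := by
  have hsub : (⋃ q ∈ {q : ℚ | (q : ℝ) ∈ E}, Ioo (0:ℝ) (q : ℝ)) ⊆ E := by
    intro y hy
    simp only [mem_iUnion, mem_setOf_eq, exists_prop] at hy
    obtain ⟨q, hq, hy⟩ := hy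
    exact hlow _ hq _ hy.1 hy.2
  have key : ∀ y ∈ E, ∀ z ∈ E, y < z → y ∈ (⋃ q ∈ {q : ℚ | (q : ℝ) ∈ E}, Ioo (0:ℝ) (q : ℝ)) := by
    intro y hy z hz hyz
    obtain ⟨q, h1, h2⟩ := exists_rat_btwn hyz
    have hy0 := (hE hy).1
    simp only [mem_iUnion, mem_setOf_eq, exists_prop]
    exact ⟨q, hlow z hz q (hy0.trans h1) h2, hy0, h1⟩
  have hss : (E \ ⋃ q ∈ {q : ℚ | (q : ℝ) ∈ E}, Ioo (0:ℝ) (q : ℝ)).Subsingleton := by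
    intro y hy z hz
    rcases lt_trichotomy y z with h | h | h
    · exact absurd (key y hy.1 z hz.1 h) hy.2
    · exact h
    · exact absurd (key z hz.1 y hy.1 h) hz.2
  refine Filter.EventuallyLE.antisymm ?_ (Filter.Eventually.of_forall hsub)
  rw [ae_le_set]
  exact hss.measure_zero _

lemma lower_meas_le (a : ℝ≥0∞) (v w : ℝ → ℝ)
    (hsub : ∀ x ∈ Iset a,
      ∫⁻ t in Set.Ioo 0 x, ENNReal.ofReal (v t) ≤ ∫⁻ t in Set.Ioo 0 x, ENNReal.ofReal (w t))
    (E : Set ℝ) (hE : E ⊆ Iset a)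
    (hlow : ∀ y ∈ E, ∀ z, 0 < z → z < y → z ∈ E) :
    ∫⁻ t in E, ENNReal.ofReal (v t) ≤ ∫⁻ t in E, ENNReal.ofReal (w t) := by
  have hae := lower_ae_eq a E hE hlow
  rw [Measure.restrict_congr_set hae]
  have hdir : DirectedOn (Function.onFun (· ⊆ ·) fun q : ℚ => Ioo (0:ℝ) (q : ℝ))
      {q : ℚ | (q : ℝ) ∈ E} := by
    intro p hp q hq
    rcases le_total p q with h | h
    · exact ⟨q, hq, Ioo_subset_Ioo_right (by exact_mod_cast h), subset_rfl⟩
    · exact ⟨p, hp, subset_rfl, Ioo_subset_Ioo_right (by exact_mod_cast h)⟩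
  have hm : MeasurableSet (⋃ q ∈ {q : ℚ | (q : ℝ) ∈ E}, Ioo (0:ℝ) (q : ℝ)) :=
    MeasurableSet.biUnion (to_countable _) fun _ _ => measurableSet_Ioo
  rw [← withDensity_apply _ hm, ← withDensity_apply _ hm,
    measure_biUnion_eq_iSup (to_countable _) hdir, measure_biUnion_eq_iSup (to_countable _) hdir]
  refine iSup₂_mono fun q hq => ?_
  rw [withDensity_apply _ measurableSet_Ioo, withDensity_apply _ measurableSet_Ioo]
  exact hsub _ (hE hq)

/-- If `v, w` are non-increasing positive weights on `I` with `v ≺ w`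
(`∫₀ˣ v ≤ ∫₀ˣ w < ∞` on `I`) and `h ≥ 0` is non-increasing with locally integrable `h^{*,w}`,
then `h^{*,v} ≺ h^{*,w}`. -/
theorem stmt_12 (a : ℝ≥0∞) (ha : 0 < a) (v w h : ℝ → ℝ)
    (hv_pos : ∀ x ∈ Iset a, 0 < v x) (hv_anti : AntitoneOn v (Iset a)) (hv_meas : Measurable v)
    (hw_pos : ∀ x ∈ Iset a, 0 < w x) (hw_anti : AntitoneOn w (Iset a)) (hw_meas : Measurable w)
    (hsub : ∀ x ∈ Iset a,
      ∫⁻ t in Set.Ioo 0 x, ENNReal.ofReal (v t) ≤ ∫⁻ t in Set.Ioo 0 x, ENNReal.ofReal (w t))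
    (hW_fin : ∀ x ∈ Iset a, ∫⁻ t in Set.Ioo 0 x, ENNReal.ofReal (w t) ≠ ∞)
    (hh_meas : Measurable h) (hh0 : ∀ x ∈ Iset a, 0 ≤ h x) (hh_anti : AntitoneOn h (Iset a))
    (hfin : ∀ x : ℝ, 0 < x → ∫⁻ t in Set.Ioo 0 x, rearr (wMeas (Iset a) w) h t ≠ ∞)
    (x : ℝ) (hx : 0 < x) :
    ∫⁻ t in Set.Ioo 0 x, rearr (wMeas (Iset a) v) h t
      ≤ ∫⁻ t in Set.Ioo 0 x, rearr (wMeas (Iset a) w) h t := by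
  refine lintegral_mono fun t => ?_
  unfold rearr rearrE
  refine sInf_le_sInf fun s hs => ⟨hs.1, le_trans ?_ hs.2⟩
  have hIm : MeasurableSet (Iset a) :=
    measurableSet_Ioi.inter (measurableSet_lt ENNReal.measurable_ofReal measurable_const)
  have hm : MeasurableSet {x | s < ENNReal.ofReal |h x|} :=
    measurableSet_lt measurable_const (ENNReal.measurable_ofReal.comp hh_meas.abs)
  unfold wMeas
  rw [withDensity_apply _ hm, withDensity_apply _ hm, Measure.restrict_restrict hm]
  refine lower_meas_le a v w hsub _ inter_subset_right ?_
  rintro y ⟨hy, hyI⟩ z hz hzy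
  have hzI : z ∈ Iset a := ⟨hz, (ENNReal.ofReal_le_ofReal hzy.le).trans_lt hyI.2⟩
  refine ⟨lt_of_lt_of_le hy (ENNReal.ofReal_le_ofReal ?_), hzI⟩
  rw [abs_of_nonneg (hh0 y hyI), abs_of_nonneg (hh0 z hzI)]
  exact hh_anti hzI hyI hzy.le
end

section
/- Let ψ : [0,∞) → [0,∞) be a convex increasing function, and let f, g : (0,∞) → [0,∞) be non-increasing functions, integrable on (0,x) for every x > 0, such that ∫₀ˣ f dm ≤ ∫₀ˣ g dm for all x > 0. Then ∫₀ˣ ψ∘f dm ≤ ∫₀ˣ ψ∘g dm for all x > 0, the inequality understood in [0,∞]. Consequently, for any σ-finite measure space (Ω,μ) and f, g ∈ L₁+L∞(Ω,μ), the submajorization f ≺_μ g implies ψ(|f|) ≺_μ ψ(|g|). -/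
open MeasureTheory Set Filter
open scoped ENNReal

/-- Decreasing rearrangement of a real function on a general measure space. -/
noncomputable def rearrG {Ω : Type} [MeasurableSpace Ω] (μ : Measure Ω) (f : Ω → ℝ) (t : ℝ) :
    ℝ≥0∞ :=
  sInf {s : ℝ≥0∞ | 0 < s ∧ μ {x | s < ENNReal.ofReal |f x|} ≤ ENNReal.ofReal t}


lemma aux_subgrad (φ : ℝ → ℝ) (hc : ConvexOn ℝ univ φ) (hm : Monotone φ) :
    ∃ c : ℝ → ℝ, Monotone c ∧ (∀ u, 0 ≤ c u) ∧ ∀ u v, φ u + c u * (v - u) ≤ φ v := by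
  have hi : ∀ u : ℝ, u ∈ interior (univ : Set ℝ) := by simp
  refine ⟨fun u => derivWithin φ (Ioi u) u, ?_, ?_, ?_⟩
  · have := hc.monotoneOn_rightDeriv
    simpa [monotoneOn_univ] using this
  · intro u
    exact (hm.monotoneOn _).derivWithin_nonneg
  · intro u v
    dsimp only
    rcases lt_trichotomy u v with h | h | h
    · have := hc.rightDeriv_le_slope_of_mem_interior (hi u) (mem_univ v) h
      rw [slope_def_field, le_div_iff₀ (by linarith)] at this
      linarith
    · subst h; simp
    · have h1 := hc.slope_le_leftDeriv_of_mem_interior (mem_univ v) (hi u) h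
      have h2 := hc.leftDeriv_le_rightDeriv_of_mem_interior (hi u)
      have := h1.trans h2
      rw [slope_def_field, div_le_iff₀ (by linarith)] at this
      linarith

lemma aux_ext_convex (ψ : ℝ → ℝ) (hconv : ConvexOn ℝ (Set.Ici 0) ψ)
    (hmono : MonotoneOn ψ (Set.Ici 0)) :
    ConvexOn ℝ univ (fun x => ψ (max x 0)) ∧ Monotone (fun x => ψ (max x 0)) := by
  refine ⟨⟨convex_univ, ?_⟩, ?_⟩
  · intro x _ y _ a b ha hb hab
    have h1 := hconv.2 (x := max x 0) (mem_Ici.2 (le_max_right _ _)) (y := max y 0)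
      (mem_Ici.2 (le_max_right _ _)) ha hb hab
    refine le_trans ?_ h1
    apply hmono (mem_Ici.2 (le_max_right _ _))
    · simp only [mem_Ici, smul_eq_mul]
      have := le_max_right x 0
      have := le_max_right y 0
      positivity
    · simp only [smul_eq_mul]
      apply max_le
      · exact add_le_add (mul_le_mul_of_nonneg_left (le_max_left _ _) ha)
          (mul_le_mul_of_nonneg_left (le_max_left _ _) hb)
      · have := le_max_right x 0
        have := le_max_right y 0
        positivity
  · intro x y hxy
    exact hmono (mem_Ici.2 (le_max_right _ _)) (mem_Ici.2 (le_max_right _ _)) (max_le_max hxy le_rfl)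

lemma aux_weight (x : ℝ) (F G : ℝ → ℝ≥0∞) (h : ℝ → ℝ)
    (hF : AEMeasurable F (volume.restrict (Ioo 0 x)))
    (hG : AEMeasurable G (volume.restrict (Ioo 0 x)))
    (hFG : ∀ y, 0 < y → ∫⁻ t in Ioo 0 y, F t ≤ ∫⁻ t in Ioo 0 y, G t)
    (hh : AntitoneOn h (Ioi 0)) (h0 : ∀ t, 0 ≤ h t) :
    ∫⁻ t in Ioo 0 x, F t * ENNReal.ofReal (h t) ≤
      ∫⁻ t in Ioo 0 x, G t * ENNReal.ofReal (h t) := by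
  have hhm : AEMeasurable h (volume.restrict (Ioo 0 x)) :=
    aemeasurable_restrict_of_antitoneOn measurableSet_Ioo (hh.mono fun t ht => ht.1)
  have key : ∀ H : ℝ → ℝ≥0∞, AEMeasurable H (volume.restrict (Ioo 0 x)) →
      ∫⁻ t in Ioo 0 x, H t * ENNReal.ofReal (h t) =
        ∫⁻ s in Ioi (0:ℝ), ∫⁻ t in {a | s < h a} ∩ Ioo 0 x, H t := by
    intro H hH
    have h1 := lintegral_withDensity_eq_lintegral_mul₀ hH hhm.ennreal_ofReal
    have h2 := lintegral_eq_lintegral_meas_lt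
      ((volume.restrict (Ioo 0 x)).withDensity H) (f := h) (Eventually.of_forall h0)
      (hhm.mono_ac (withDensity_absolutelyContinuous _ _))
    simp only [Pi.mul_apply] at h1
    rw [← h1, h2]
    congr 1
    ext s
    rw [withDensity_apply', Measure.restrict_restrict' measurableSet_Ioo]
  rw [key F hF, key G hG]
  apply lintegral_mono
  intro s
  dsimp only
  set S := {a | s < h a} ∩ Ioo 0 x with hS
  rcases S.eq_empty_or_nonempty with he | ⟨z, hz⟩
  · simp [he]
  have hbdd : BddAbove S := ⟨x, fun a ha => ha.2.2.le⟩
  have hy : 0 < sSup S := lt_of_lt_of_le hz.2.1 (le_csSup hbdd hz)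
  have hsub1 : Ioo 0 (sSup S) ⊆ S := by
    intro a ha
    obtain ⟨b, hb, hab⟩ := exists_lt_of_lt_csSup ⟨z, hz⟩ ha.2
    exact ⟨lt_of_lt_of_le hb.1 (hh ha.1 hb.2.1 hab.le), ha.1, hab.trans hb.2.2⟩
  have hsub2 : S ⊆ Ioc 0 (sSup S) := fun a ha => ⟨ha.2.1, le_csSup hbdd ha⟩
  have hae : S =ᵐ[volume] Ioo 0 (sSup S) := by
    apply EventuallyLE.antisymm
    · exact (LE.le.eventuallyLE hsub2).trans Ioo_ae_eq_Ioc.symm.le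
    · exact LE.le.eventuallyLE hsub1
  rw [setLIntegral_congr hae, setLIntegral_congr hae]
  exact hFG _ hy

lemma aux_main (φ : ℝ → ℝ) (hc : ConvexOn ℝ univ φ) (hm : Monotone φ) (hφ0 : ∀ x, 0 ≤ φ x)
    (f g : ℝ → ℝ) (hf0 : ∀ x ∈ Set.Ioi (0:ℝ), 0 ≤ f x) (hg0 : ∀ x ∈ Set.Ioi (0:ℝ), 0 ≤ g x)
    (hf : AntitoneOn f (Set.Ioi 0)) (hg : AntitoneOn g (Set.Ioi 0))
    (hfin : ∀ x : ℝ, 0 < x → ∫⁻ t in Set.Ioo 0 x, ENNReal.ofReal (g t) ≠ ∞)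
    (hfg : ∀ x : ℝ, 0 < x → ∫⁻ t in Set.Ioo 0 x, ENNReal.ofReal (f t) ≤
      ∫⁻ t in Set.Ioo 0 x, ENNReal.ofReal (g t)) (x : ℝ) (hx : 0 < x) :
    ∫⁻ t in Set.Ioo 0 x, ENNReal.ofReal (φ (f t))
          ≤ ∫⁻ t in Set.Ioo 0 x, ENNReal.ofReal (φ (g t)) := by
  obtain ⟨c, cm, c0, hsub⟩ := aux_subgrad φ hc hm
  have meas : ∀ k : ℝ → ℝ, AntitoneOn k (Ioi 0) → AEMeasurable k (volume.restrict (Ioo 0 x)) :=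
    fun k hk => aemeasurable_restrict_of_antitoneOn measurableSet_Ioo (hk.mono fun t ht => ht.1)
  have hfn : ∀ n : ℕ, AntitoneOn (fun t => min (f t) n) (Ioi 0) :=
    fun n a ha b hb hab => min_le_min (hf ha hb hab) le_rfl
  have hφfn : ∀ n : ℕ, AntitoneOn (fun t => φ (min (f t) n)) (Ioi 0) :=
    fun n => hm.comp_antitoneOn (hfn n)
  have hcfn : ∀ n : ℕ, AntitoneOn (fun t => c (min (f t) n)) (Ioi 0) :=
    fun n => cm.comp_antitoneOn (hfn n)
  have step : ∀ n : ℕ, ∫⁻ t in Ioo 0 x, ENNReal.ofReal (φ (min (f t) n)) ≤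
      ∫⁻ t in Ioo 0 x, ENNReal.ofReal (φ (g t)) := by
    intro n
    have hw := aux_weight x (fun t => ENNReal.ofReal (min (f t) n)) (fun t => ENNReal.ofReal (g t))
      (fun t => c (min (f t) n)) (meas _ (hfn n)).ennreal_ofReal (meas _ hg).ennreal_ofReal
      (fun y hy => (lintegral_mono fun t => ENNReal.ofReal_le_ofReal (min_le_left _ _)).trans
        (hfg y hy)) (hcfn n) (fun t => c0 _)
    have hfinite : ∫⁻ t in Ioo 0 x, ENNReal.ofReal (g t) * ENNReal.ofReal (c (min (f t) n)) ≠ ∞ := by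
      refine ne_top_of_le_ne_top (b := (∫⁻ t in Ioo 0 x, ENNReal.ofReal (g t)) *
        ENNReal.ofReal (c n)) (ENNReal.mul_ne_top (hfin x hx) ENNReal.ofReal_ne_top) ?_
      rw [← lintegral_mul_const' _ _ ENNReal.ofReal_ne_top]
      apply lintegral_mono
      intro t
      dsimp only
      gcongr
      exact cm (min_le_right _ _)
    have hpt : ∫⁻ t in Ioo 0 x, (ENNReal.ofReal (φ (min (f t) n)) +
          ENNReal.ofReal (g t) * ENNReal.ofReal (c (min (f t) n))) ≤
        ∫⁻ t in Ioo 0 x, (ENNReal.ofReal (φ (g t)) +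
          ENNReal.ofReal (min (f t) n) * ENNReal.ofReal (c (min (f t) n))) := by
      apply setLIntegral_mono' measurableSet_Ioo
      intro t ht
      have h1 := hf0 t ht.1
      have h2 := hg0 t ht.1
      have h3 : 0 ≤ min (f t) n := le_min h1 (by positivity)
      rw [← ENNReal.ofReal_mul h2, ← ENNReal.ofReal_mul h3,
        ← ENNReal.ofReal_add (hφ0 _) (mul_nonneg h2 (c0 _)),
        ← ENNReal.ofReal_add (hφ0 _) (mul_nonneg h3 (c0 _))]
      apply ENNReal.ofReal_le_ofReal
      have := hsub (min (f t) n) (g t)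
      linarith
    rw [lintegral_add_left' (meas _ (hφfn n)).ennreal_ofReal,
      lintegral_add_left' (meas (fun t => φ (g t)) (hm.comp_antitoneOn hg)).ennreal_ofReal] at hpt
    exact (ENNReal.add_le_add_iff_right hfinite).1 (hpt.trans (add_le_add le_rfl hw))
  have hsup : ∀ t, ENNReal.ofReal (φ (f t)) ≤ ⨆ n : ℕ, ENNReal.ofReal (φ (min (f t) n)) := by
    intro t
    obtain ⟨n, hn⟩ := exists_nat_ge (f t)
    refine le_iSup_of_le n ?_
    rw [min_eq_left hn]
  refine (lintegral_mono hsup).trans ?_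
  rw [lintegral_iSup' (fun n => (meas _ (hφfn n)).ennreal_ofReal)]
  · exact iSup_le step
  · refine Eventually.of_forall fun t n m hnm => ?_
    apply ENNReal.ofReal_le_ofReal (hm _)
    apply min_le_min le_rfl
    exact_mod_cast hnm

lemma aux_rearr_anti {Ω : Type} [MeasurableSpace Ω] (μ : Measure Ω) (f : Ω → ℝ) :
    Antitone (rearrG μ f) := by
  intro a b hab
  apply sInf_le_sInf
  rintro s ⟨h1, h2⟩
  exact ⟨h1, h2.trans (ENNReal.ofReal_le_ofReal hab)⟩

lemma aux_rearr_ne_top {Ω : Type} [MeasurableSpace Ω] (μ : Measure Ω) (f : Ω → ℝ)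
    (h : ∀ x : ℝ, 0 < x → ∫⁻ t in Set.Ioo 0 x, rearrG μ f t ≠ ∞) (t : ℝ) (ht : 0 < t) :
    rearrG μ f t ≠ ∞ := by
  intro htop
  apply h t ht
  rw [eq_top_iff]
  calc (∞ : ℝ≥0∞) = ∫⁻ s in Ioo 0 t, ∞ := by simp [ENNReal.top_mul, ht]
    _ ≤ _ := by
      apply setLIntegral_mono' measurableSet_Ioo
      intro s hs
      rw [← htop]
      exact aux_rearr_anti μ f hs.2.le

lemma aux_rearr_le {Ω : Type} [MeasurableSpace Ω] (μ : Measure Ω) (f : Ω → ℝ) (t : ℝ)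
    (r : ℝ≥0∞) (hr : 0 < r) (h : μ {x | r < ENNReal.ofReal |f x|} ≤ ENNReal.ofReal t) :
    rearrG μ f t ≤ r := sInf_le ⟨hr, h⟩

lemma aux_rearr_zero {Ω : Type} [MeasurableSpace Ω] (μ : Measure Ω) (f : Ω → ℝ) (t : ℝ)
    (ht : μ univ ≤ ENNReal.ofReal t) : rearrG μ f t = 0 := by
  rw [← nonpos_iff_eq_zero]
  apply le_of_forall_gt
  intro s hs
  obtain ⟨r, hr0, hr⟩ := exists_between hs
  exact (aux_rearr_le μ f t r hr0 ((measure_mono (subset_univ _)).trans ht)).trans_lt hr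

lemma aux_rearr_meas {Ω : Type} [MeasurableSpace Ω] (μ : Measure Ω) (f : Ω → ℝ) (t : ℝ)
    (s : ℝ≥0∞) (hs : rearrG μ f t < s) :
    μ {x | s < ENNReal.ofReal |f x|} ≤ ENNReal.ofReal t := by
  obtain ⟨r, ⟨_, hr⟩, hrs⟩ := sInf_lt_iff.1 hs
  exact (measure_mono fun x hx => hrs.trans hx).trans hr

lemma aux_rearr_comp {Ω : Type} [MeasurableSpace Ω] (μ : Measure Ω) (φ : ℝ → ℝ)
    (hc : Continuous φ) (hm : Monotone φ) (hφ0 : ∀ x, 0 ≤ φ x) (f : Ω → ℝ) (t : ℝ)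
    (hft : rearrG μ f t ≠ ∞) (ht : ENNReal.ofReal t < μ univ) :
    rearrG μ (fun y => φ |f y|) t = ENNReal.ofReal (φ (rearrG μ f t).toReal) := by
  set a := (rearrG μ f t).toReal with ha
  have ha0 : 0 ≤ a := ENNReal.toReal_nonneg
  have hea : rearrG μ f t = ENNReal.ofReal a := (ENNReal.ofReal_toReal hft).symm
  have hset : ∀ b : ℝ, 0 ≤ b → {x | ENNReal.ofReal b < ENNReal.ofReal |f x|} = {x | b < |f x|} := by
    intro b hb
    ext x
    simp [ENNReal.ofReal_lt_ofReal_iff_of_nonneg hb]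
  apply le_antisymm
  · apply le_of_forall_gt
    intro s hs
    obtain ⟨r, hr, hrs⟩ := exists_between hs
    refine (aux_rearr_le μ _ t r (pos_of_gt hr) ?_).trans_lt hrs
    -- find b > a with φ b < r
    have hcont : Tendsto (fun b => ENNReal.ofReal (φ b)) (nhdsWithin a (Ioi a))
        (nhds (ENNReal.ofReal (φ a))) :=
      ((ENNReal.continuous_ofReal.comp hc).tendsto a).mono_left nhdsWithin_le_nhds
    obtain ⟨b, hb1, hb2⟩ := ((hcont.eventually_lt_const hr).and self_mem_nhdsWithin).exists
    have hab : a < b := hb2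
    have h1 := aux_rearr_meas μ f t (ENNReal.ofReal b)
      (by rw [hea]; exact (ENNReal.ofReal_lt_ofReal_iff_of_nonneg ha0).2 hab)
    rw [hset b (by linarith)] at h1
    refine (measure_mono ?_).trans h1
    intro x hx
    by_contra hcon
    simp only [mem_ofPred_eq, not_lt] at hcon hx
    rw [abs_of_nonneg (hφ0 _)] at hx
    exact absurd (hx.trans_le (ENNReal.ofReal_le_ofReal (hm hcon))) (not_lt.2 hb1.le)
  · apply le_sInf
    rintro s ⟨hs0, hs⟩
    simp only [abs_of_nonneg (hφ0 _)] at hs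
    by_contra! hlt
    rcases ha0.eq_or_lt with h0 | h0
    · refine absurd ht (not_lt.2 (le_trans (measure_mono ?_) hs))
      intro x _
      refine hlt.trans_le (ENNReal.ofReal_le_ofReal (hm ?_))
      rw [← h0]; positivity
    · have hcont : Tendsto (fun b => ENNReal.ofReal (φ b)) (nhdsWithin a (Iio a))
          (nhds (ENNReal.ofReal (φ a))) :=
        ((ENNReal.continuous_ofReal.comp hc).tendsto a).mono_left nhdsWithin_le_nhds
      obtain ⟨b, hb1, hb2, hb3⟩ := ((hcont.eventually_const_lt hlt).and
        (Ioo_mem_nhdsLT h0)).exists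
      have : rearrG μ f t ≤ ENNReal.ofReal b := by
        refine aux_rearr_le μ f t _ (by simpa using hb2) ?_
        rw [hset b hb2.le]
        refine (measure_mono ?_).trans hs
        intro x hx
        exact hb1.trans_le (ENNReal.ofReal_le_ofReal (hm (le_of_lt hx)))
      rw [hea, ENNReal.ofReal_le_ofReal_iff hb2.le] at this
      linarith

/-- For a convex increasing `ψ : [0,∞) → [0,∞)`: (1) if `f, g ≥ 0` are
non-increasing on `(0,∞)`, locally integrable, with `∫₀ˣ f ≤ ∫₀ˣ g` for all `x > 0`, then
`∫₀ˣ ψ∘f ≤ ∫₀ˣ ψ∘g` for all `x > 0`; (2) consequently on any σ-finite measure space,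
`f ≺_μ g` implies `ψ(|f|) ≺_μ ψ(|g|)` for `f, g ∈ L₁+L∞(Ω,μ)`. -/
theorem stmt_13 (ψ : ℝ → ℝ) (hconv : ConvexOn ℝ (Set.Ici 0) ψ)
    (hmono : MonotoneOn ψ (Set.Ici 0)) (hψ0 : ∀ x : ℝ, 0 ≤ x → 0 ≤ ψ x) :
    (∀ f g : ℝ → ℝ, (∀ x ∈ Set.Ioi (0:ℝ), 0 ≤ f x) → (∀ x ∈ Set.Ioi (0:ℝ), 0 ≤ g x) →
      AntitoneOn f (Set.Ioi 0) → AntitoneOn g (Set.Ioi 0) →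
      (∀ x : ℝ, 0 < x → IntegrableOn f (Set.Ioo 0 x)) →
      (∀ x : ℝ, 0 < x → IntegrableOn g (Set.Ioo 0 x)) →
      (∀ x : ℝ, 0 < x → ∫ t in Set.Ioo 0 x, f t ≤ ∫ t in Set.Ioo 0 x, g t) →
      ∀ x : ℝ, 0 < x →
        ∫⁻ t in Set.Ioo 0 x, ENNReal.ofReal (ψ (f t))
          ≤ ∫⁻ t in Set.Ioo 0 x, ENNReal.ofReal (ψ (g t))) ∧
    (∀ (Ω : Type) [MeasurableSpace Ω] (μ : Measure Ω) [SigmaFinite μ],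
      ∀ f g : Ω → ℝ, Measurable f → Measurable g →
      (∀ x : ℝ, 0 < x → ∫⁻ t in Set.Ioo 0 x, rearrG μ f t ≠ ∞) →
      (∀ x : ℝ, 0 < x → ∫⁻ t in Set.Ioo 0 x, rearrG μ g t ≠ ∞) →
      (∀ x : ℝ, 0 < x →
        ∫⁻ t in Set.Ioo 0 x, rearrG μ f t ≤ ∫⁻ t in Set.Ioo 0 x, rearrG μ g t) →
      ∀ x : ℝ, 0 < x →
        ∫⁻ t in Set.Ioo 0 x, rearrG μ (fun y => ψ |f y|) t
          ≤ ∫⁻ t in Set.Ioo 0 x, rearrG μ (fun y => ψ |g y|) t) := by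
  obtain ⟨hc, hm⟩ := aux_ext_convex ψ hconv hmono
  set φ : ℝ → ℝ := fun x => ψ (max x 0) with hφ
  have hφ0 : ∀ x, 0 ≤ φ x := fun x => hψ0 _ (le_max_right _ _)
  have hφψ : ∀ x, 0 ≤ x → ψ x = φ x := fun x hx => by simp [hφ, hx]
  have hcont : Continuous φ := continuousOn_univ.1 (hc.continuousOn isOpen_univ)
  constructor
  · intro f g hf0 hg0 hf hg hfi hgi hfg x hx
    have conv : ∀ k : ℝ → ℝ, (∀ x ∈ Set.Ioi (0:ℝ), 0 ≤ k x) →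
        (∀ x : ℝ, 0 < x → IntegrableOn k (Set.Ioo 0 x)) → ∀ y : ℝ, 0 < y →
        ∫⁻ t in Ioo 0 y, ENNReal.ofReal (k t) = ENNReal.ofReal (∫ t in Ioo 0 y, k t) := by
      intro k hk0 hki y hy
      rw [ofReal_integral_eq_lintegral_ofReal (hki y hy)]
      exact (ae_restrict_iff' measurableSet_Ioo).2 (Eventually.of_forall fun t ht => hk0 t ht.1)
    have := aux_main φ hc hm hφ0 f g hf0 hg0 hf hg
      (fun y hy => by rw [conv g hg0 hgi y hy]; exact ENNReal.ofReal_ne_top)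
      (fun y hy => by
        rw [conv g hg0 hgi y hy, conv f hf0 hfi y hy]
        exact ENNReal.ofReal_le_ofReal (hfg y hy)) x hx
    rw [setLIntegral_congr_fun measurableSet_Ioo
        (fun t ht => by simp only [hφψ _ (hf0 t ht.1)] : EqOn (fun t => ENNReal.ofReal (ψ (f t)))
          (fun t => ENNReal.ofReal (φ (f t))) (Ioo 0 x)),
      setLIntegral_congr_fun measurableSet_Ioo
        (fun t ht => by simp only [hφψ _ (hg0 t ht.1)] : EqOn (fun t => ENNReal.ofReal (ψ (g t)))
          (fun t => ENNReal.ofReal (φ (g t))) (Ioo 0 x))]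
    exact this
  · intro Ω _ μ _ f g _ _ hf hg hfg x hx
    have hψφ : ∀ k : Ω → ℝ, (fun y => ψ |k y|) = fun y => φ |k y| := fun k => by
      funext y; exact hφψ _ (abs_nonneg _)
    rw [hψφ f, hψφ g]
    have conv : ∀ k : Ω → ℝ, (∀ x : ℝ, 0 < x → ∫⁻ t in Set.Ioo 0 x, rearrG μ k t ≠ ∞) →
        ∀ y : ℝ, ∫⁻ t in Ioo 0 y, ENNReal.ofReal (rearrG μ k t).toReal =
          ∫⁻ t in Ioo 0 y, rearrG μ k t := by
      intro k hk y
      refine setLIntegral_congr_fun measurableSet_Ioo fun t ht => ?_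
      exact ENNReal.ofReal_toReal (aux_rearr_ne_top μ k hk t ht.1)
    have anti : ∀ k : Ω → ℝ, (∀ x : ℝ, 0 < x → ∫⁻ t in Set.Ioo 0 x, rearrG μ k t ≠ ∞) →
        AntitoneOn (fun t => (rearrG μ k t).toReal) (Ioi 0) := by
      intro k hk a ha b hb hab
      exact ENNReal.toReal_mono (aux_rearr_ne_top μ k hk a ha) (aux_rearr_anti μ k hab)
    have main := aux_main φ hc hm hφ0 (fun t => (rearrG μ f t).toReal)
      (fun t => (rearrG μ g t).toReal) (fun _ _ => ENNReal.toReal_nonneg)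
      (fun _ _ => ENNReal.toReal_nonneg) (anti f hf) (anti g hg)
      (fun y hy => by rw [conv g hg]; exact hg y hy)
      (fun y hy => by rw [conv g hg, conv f hf]; exact hfg y hy)
    -- it suffices to integrate up to `min x (μ univ)`
    have red : ∃ y : ℝ, 0 ≤ y ∧ ∀ k : Ω → ℝ,
        (∀ x : ℝ, 0 < x → ∫⁻ t in Set.Ioo 0 x, rearrG μ k t ≠ ∞) →
        ∫⁻ t in Ioo 0 x, rearrG μ (fun y => φ |k y|) t =
          ∫⁻ t in Ioo 0 y, ENNReal.ofReal (φ (rearrG μ k t).toReal) := by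
      by_cases hxμ : ENNReal.ofReal x ≤ μ univ
      · refine ⟨x, hx.le, fun k hk => ?_⟩
        refine setLIntegral_congr_fun measurableSet_Ioo fun t ht => ?_
        exact aux_rearr_comp μ φ hcont hm hφ0 k t (aux_rearr_ne_top μ k hk t ht.1)
          (((ENNReal.ofReal_lt_ofReal_iff hx).2 ht.2).trans_le hxμ)
      · push Not at hxμ
        have hμ : μ univ ≠ ∞ := hxμ.ne_top
        refine ⟨(μ univ).toReal, ENNReal.toReal_nonneg, fun k hk => ?_⟩
        set M := (μ univ).toReal with hM
        have hMe : ENNReal.ofReal M = μ univ := ENNReal.ofReal_toReal hμ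
        have hMx : M < x := by
          rw [← hMe] at hxμ
          exact (ENNReal.ofReal_lt_ofReal_iff hx).1 hxμ
        have hsplit : Ioo 0 x = Ioo 0 M ∪ (Ioo 0 x ∩ Ici M) := by
          ext t
          simp only [mem_Ioo, mem_union, mem_inter_iff, mem_Ici]
          constructor
          · rintro ⟨h1, h2⟩
            rcases lt_or_ge t M with h | h
            · exact Or.inl ⟨h1, h⟩
            · exact Or.inr ⟨⟨h1, h2⟩, h⟩
          · rintro (⟨h1, h2⟩ | ⟨⟨h1, h2⟩, h3⟩)
            · exact ⟨h1, h2.trans hMx⟩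
            · exact ⟨h1, h2⟩
        rw [hsplit, lintegral_union (measurableSet_Ioo.inter measurableSet_Ici)]
        · rw [setLIntegral_congr_fun (g := fun _ => 0)
            (measurableSet_Ioo.inter measurableSet_Ici) (fun t ht => ?_)]
          · rw [lintegral_zero, add_zero]
            refine setLIntegral_congr_fun measurableSet_Ioo fun t ht => ?_
            refine aux_rearr_comp μ φ hcont hm hφ0 k t (aux_rearr_ne_top μ k hk t ht.1) ?_
            rw [← hMe]
            exact (ENNReal.ofReal_lt_ofReal_iff (ht.1.trans ht.2)).2 ht.2
          · apply aux_rearr_zero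
            rw [← hMe]
            exact ENNReal.ofReal_le_ofReal ht.2
        · rw [Set.disjoint_left]
          intro t ht ht'
          exact absurd ht.2 (not_lt.2 ht'.2)
    obtain ⟨y, hy0, hy⟩ := red
    rw [hy f hf, hy g hg]
    rcases hy0.eq_or_lt with h | h
    · simp [← h]
    · exact main y h
end
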